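/- arXiv:2601.10941 — 4 statements merged into one kernel-verified Lean document; each statement's English description precedes it below -/
import Mathlib

section
/- Under assumptions (I1)–(I4), let k ≥ 1 be an integer and let n_1 < n_2 < … < n_k be integers with λ_{n_i} < λ_{n_i+1} for each i (so that the spectral gaps (λ_{n_i}, λ_{n_i+1}) are pairwise disjoint). Then there exists μ_k > 0 such that for every μ ∈ (0, μ_k) there exist real numbers Λ_1, …, Λ_k with Λ_i ∈ (λ_{n_i}, λ_{n_i+1}) and vectors u_1, …, u_k ∈ E satisfying q_{Λ_i}(u_i, v) = I′(u_i)[v] for all v ∈ E (i.e. u_i solves A u = Λ_i u + I′(u) weakly) and ‖u_i‖_H = μ for each i; in particular the k pairs (u_i, Λ_i) are distinct. -/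
open Filter Topology Set
open scoped InnerProductSpace

/- Abstract setting: `E = D(A^{1/2})` is a real Hilbert space in which the rescaled
eigenfunctions `ζ_k / √(1+λ_k)` form a Hilbert basis (encoded by `hON` and `hdense` below);
the `H`-inner product of `u, v ∈ E` is recovered as `∑ₖ ⟨u,ζ_k⟩_H ⟨v,ζ_k⟩_H`, where
`⟨u,ζ_k⟩_H = ⟨u,ζ_k⟩_E / (1+λ_k)`. -/

variable {E : Type*} [NormedAddCommGroup E] [InnerProductSpace ℝ E] [CompleteSpace E]

/-- The `H`-inner-product coefficient `⟨u, ζ_k⟩_H = ⟨u, ζ_k⟩_E / (1 + λ_k)`. -/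
noncomputable def coefH (lam : ℕ → ℝ) (ζ : ℕ → E) (u : E) (k : ℕ) : ℝ :=
  ⟪u, ζ k⟫_ℝ / (1 + lam k)

/-- The square of the `H`-norm: `‖u‖_H² = ∑ₖ ⟨u,ζ_k⟩_H²`. -/
noncomputable def normHsq (lam : ℕ → ℝ) (ζ : ℕ → E) (u : E) : ℝ :=
  ∑' k, (coefH lam ζ u k) ^ 2

/-- The symmetric bilinear form `q_λ(u,v) = ∑ₖ (λ_k − λ) ⟨u,ζ_k⟩_H ⟨v,ζ_k⟩_H`. -/
noncomputable def qForm (lam : ℕ → ℝ) (ζ : ℕ → E) (lambda : ℝ) (u v : E) : ℝ :=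
  ∑' k, (lam k - lambda) * (coefH lam ζ u k * coefH lam ζ v k)

/-- The action functional `J_λ(u) = ½ q_λ(u) − I(u)`. -/
noncomputable def Jfun (lam : ℕ → ℝ) (ζ : ℕ → E) (I : E → ℝ) (lambda : ℝ) (u : E) : ℝ :=
  qForm lam ζ lambda u u / 2 - I u

/-- `E_n`, the span of the eigenfunctions `ζ_0, …, ζ_n` (the first `n+1` of them). -/
noncomputable def Esub (ζ : ℕ → E) (n : ℕ) : Submodule ℝ E :=
  Submodule.span ℝ (ζ '' {k : ℕ | k ≤ n})

/-- `F_n(u) = E_n ⊕ ℝ u`. -/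
noncomputable def Fsub (ζ : ℕ → E) (n : ℕ) (u : E) : Submodule ℝ E :=
  Esub ζ n ⊔ Submodule.span ℝ {u}

/-- `F_n(u)⁺ = E_n ⊕ ℝ⁺ u = {v + t u : v ∈ E_n, t > 0}`. -/
def FsubPlus (ζ : ℕ → E) (n : ℕ) (u : E) : Set E :=
  {w | ∃ v ∈ Esub ζ n, ∃ t : ℝ, 0 < t ∧ w = v + t • u}

/-- The derivative of `J_λ` at `u` applied to `w`: `J_λ'(u)[w] = q_λ(u,w) − I'(u)[w]`. -/
noncomputable def Jderiv (lam : ℕ → ℝ) (ζ : ℕ → E) (I' : E → E →L[ℝ] ℝ)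
    (lambda : ℝ) (u w : E) : ℝ :=
  qForm lam ζ lambda u w - I' u w

/-- The Nehari–Pankov set `NP_λ = {u ∈ E ∖ E_n : J_λ'(u)|_{F_n(u)} = 0}`. -/
def NehariPankov (lam : ℕ → ℝ) (ζ : ℕ → E) (I' : E → E →L[ℝ] ℝ)
    (n : ℕ) (lambda : ℝ) : Set E :=
  {u | u ∉ Esub ζ n ∧ ∀ w ∈ Fsub ζ n u, Jderiv lam ζ I' lambda u w = 0}

/-- The ground-state level `c_λ = inf_{NP_λ} J_λ`. -/
noncomputable def clevel (lam : ℕ → ℝ) (ζ : ℕ → E) (I : E → ℝ) (I' : E → E →L[ℝ] ℝ)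
    (n : ℕ) (lambda : ℝ) : ℝ :=
  sInf (Jfun lam ζ I lambda '' NehariPankov lam ζ I' n lambda)

/-- The set `Q_λ` of minimizers of `J_λ` on `NP_λ`. -/
def Qset (lam : ℕ → ℝ) (ζ : ℕ → E) (I : E → ℝ) (I' : E → E →L[ℝ] ℝ)
    (n : ℕ) (lambda : ℝ) : Set E :=
  {u | u ∈ NehariPankov lam ζ I' n lambda ∧
    Jfun lam ζ I lambda u = clevel lam ζ I I' n lambda}

/-- `E_n^⊥ = {w ∈ E : ⟨w, ζ_k⟩_H = 0 for k = 0, …, n}`. -/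
def EsubPerp (lam : ℕ → ℝ) (ζ : ℕ → E) (n : ℕ) : Set E :=
  {w | ∀ k ≤ n, coefH lam ζ w k = 0}

/-! For `w ∈ Vᗮ` nonzero, where `V` is spanned by the eigenvectors below the gap, the action has a
unique maximum on the half-fiber `V ⊕ ℝ₊ w`, with value `m(Λ, w)`. Solutions of mass `μ` come from
minimizing `m(Λ, w) + (μ² / 2) Λ` jointly in the frequency `Λ` and in `w`: by the envelope theorem,
stationarity in `w` makes the maximizer on the fiber a free critical point of the action, and
stationarity in `Λ`, where the derivative of the action is `-‖u‖_H² / 2`, fixes its mass.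

Such a minimum must not lie at an end of the frequency interval. Fix `l₀` inside the gap: a
mountain-pass estimate bounds `m(l₀, ·)` below by some `d > 0`. At the upper end `β` of the gap,
testing with an eigenvector shows that `inf m(Λ, ·) = o(β - Λ)`, so for small `μ` the infimum beats
both the values at `l₀`, which are at least `d`, and those near `β`. Every gap is treated
independently, and solutions from different gaps differ by their frequencies. -/

namespace NormalizedSolutions

section WeakConvergence

variable {X : Type*} [NormedAddCommGroup X] [InnerProductSpace ℝ X]

/-- Weak convergence `u i ⇀ a` along `l`, tested against every continuous linear functional. -/
def WeakTendsto {α : Type*} (u : α → X) (l : Filter α) (a : X) : Prop :=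
  ∀ φ : X →L[ℝ] ℝ, Tendsto (fun i => φ (u i)) l (𝓝 (φ a))

variable {α : Type*} {u : α → X} {l : Filter α} {a : X}

theorem WeakTendsto.inner (h : WeakTendsto u l a) (x : X) :
    Tendsto (fun i => ⟪x, u i⟫_ℝ) l (𝓝 ⟪x, a⟫_ℝ) :=
  h (innerSL ℝ x)

theorem WeakTendsto.mem_orthogonal [l.NeBot] (h : WeakTendsto u l a) {V : Submodule ℝ X}
    (hu : ∀ i, u i ∈ Vᗮ) : a ∈ Vᗮ := by
  rw [Submodule.mem_orthogonal]
  intro v hv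
  refine tendsto_nhds_unique (h.inner v) ?_
  simp only [fun i => V.inner_right_of_mem_orthogonal hv (hu i), tendsto_const_nhds]

theorem exists_subseq_weakTendsto [CompleteSpace X] {x : ℕ → X} (hx : ∀ i, ‖x i‖ ≤ 1) :
    ∃ a, ∃ φ : ℕ → ℕ, StrictMono φ ∧ WeakTendsto (x ∘ φ) atTop a := by
  -- Sequential Banach-Alaoglu needs a separable space, such as the closed span of the sequence.
  set F := (Submodule.span ℝ (range x)).topologicalClosure
  have hsep : TopologicalSpace.IsSeparable (F : Set X) :=
    (countable_range x).isSeparable.span.closure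
  have : TopologicalSpace.SeparableSpace F := hsep.separableSpace
  have hxF (i : ℕ) : x i ∈ F :=
    Submodule.le_topologicalClosure _ (Submodule.subset_span (mem_range_self i))
  let f (i : ℕ) : WeakDual ℝ F := StrongDual.toWeakDual (innerSL ℝ (⟨x i, hxF i⟩ : F))
  have hf (i : ℕ) : f i ∈ WeakDual.toStrongDual ⁻¹' Metric.closedBall (0 : StrongDual ℝ F) 1 :=
    mem_closedBall_zero_iff.2 ((innerSL_apply_norm ℝ (⟨x i, hxF i⟩ : F)).trans_le (hx i))
  obtain ⟨g, -, φ, hφ, hlim⟩ := WeakDual.isSeqCompact_closedBall ℝ F 0 1 hf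
  refine ⟨(InnerProductSpace.toDual ℝ F).symm (WeakDual.toStrongDual g), φ, hφ, fun ψ => ?_⟩
  let y : F := (InnerProductSpace.toDual ℝ F).symm (ψ ∘L F.subtypeL)
  have hy (z : F) : ⟪z, y⟫_ℝ = ψ z := by
    rw [real_inner_comm, InnerProductSpace.toDual_symm_apply]; rfl
  have hev := ((WeakBilin.eval_continuous _ y).tendsto g).comp hlim
  rw [← hy, InnerProductSpace.toDual_symm_apply]
  refine hev.congr fun i => ?_
  exact hy ⟨x (φ i), hxF (φ i)⟩

end WeakConvergence

section Maximizers

variable {X P : Type*} [TopologicalSpace X] [TopologicalSpace P]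

theorem eventually_forall_le_imp_mem_of_unique_max {Y : Type*} [LinearOrder Y]
    [TopologicalSpace Y] [OrderClosedTopology Y] {f : X × P → Y} (hf : Continuous f)
    {s : Set P} (hs : IsClosed s) {x₀ : X} {p₀ : P}
    (hmax : ∀ p ∈ s, p ≠ p₀ → f (x₀, p) < f (x₀, p₀))
    (hcoer : ∀ᶠ z in 𝓝 x₀ ×ˢ cocompact P, f z < f (x₀, p₀)) {U : Set P} (hU : U ∈ 𝓝 p₀) :
    ∀ᶠ x in 𝓝 x₀, ∀ p ∈ s, f (x₀, p₀) ≤ f (x, p) → p ∈ U := by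
  obtain ⟨A, hA, B, hB, hAB⟩ := Filter.mem_prod_iff.1 hcoer
  obtain ⟨K, hK, hKB⟩ := mem_cocompact.1 hB
  have hC : IsCompact ((K ∩ s) \ interior U) := (hK.inter_right hs).diff isOpen_interior
  have hnear : ∀ᶠ x in 𝓝 x₀, ∀ p ∈ (K ∩ s) \ interior U, f (x, p) < f (x₀, p₀) := by
    refine hC.eventually_forall_of_forall_eventually fun p hp => ?_
    refine hf.continuousAt.eventually_lt_const (hmax p hp.1.2 ?_)
    rintro rfl
    exact hp.2 (mem_interior_iff_mem_nhds.2 hU)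
  filter_upwards [hnear, hA] with x hx hxA p hps hle
  by_contra hpU
  by_cases hpK : p ∈ K
  · exact (hx p ⟨⟨hpK, hps⟩, fun h => hpU (interior_subset h)⟩).not_ge hle
  · exact (show f (x, p) < f (x₀, p₀) from hAB ⟨hxA, hKB hpK⟩).not_ge hle

theorem eq_zero_of_min_of_max {F G : ℝ × P → ℝ} (hF : Continuous F) {a : ℝ} {p₀ : P}
    (hG : ContinuousAt G (a, p₀))
    (hderiv : ∀ t p, HasDerivAt (fun τ => F (τ, p)) (G (t, p)) t)
    {s : Set P} (hs : IsClosed s)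
    (hmax : ∀ p ∈ s, p ≠ p₀ → F (a, p) < F (a, p₀))
    (hcoer : ∀ᶠ z in 𝓝 a ×ˢ cocompact P, F z < F (a, p₀))
    (hmin : ∀ᶠ t in 𝓝 a, ∃ p ∈ s, F (a, p₀) ≤ F (t, p)) : G (a, p₀) = 0 := by
  by_contra hne
  set σ := -G (a, p₀)
  -- Moving from `a` in the direction `σ` decreases `F (·, p)` for all `p` near `p₀`.
  have hneg : ∀ᶠ z in 𝓝 (a, p₀), σ * G z < 0 := by
    refine (continuousAt_const.mul hG).eventually_lt_const ?_
    exact (neg_mul _ _).trans_lt (neg_lt_zero.2 (mul_self_pos.2 hne))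
  obtain ⟨A, hA, U, hU, hAU⟩ := mem_nhds_prod_iff.1 hneg
  have hnear := eventually_forall_le_imp_mem_of_unique_max hF hs hmax hcoer hU
  have hpath : Tendsto (fun τ : ℝ => a + τ * σ) (𝓝 0) (𝓝 a) := by
    have : Continuous fun τ : ℝ => a + τ * σ := by fun_prop
    simpa using this.tendsto 0
  obtain ⟨ε, hε, hball⟩ := Metric.eventually_nhds_iff.1
    (hpath.eventually ((hnear.and hmin).and hA))
  have hpos : 0 < ε / 2 := half_pos hε
  have hin {τ : ℝ} (h0 : 0 ≤ τ) (h1 : τ ≤ ε / 2) : dist τ 0 < ε := by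
    rw [Real.dist_0_eq_abs, abs_of_nonneg h0]; linarith
  obtain ⟨⟨hmem, p, hps, hle⟩, -⟩ := hball (hin hpos.le le_rfl)
  have hpU : p ∈ U := hmem p hps hle
  have hcurve (τ : ℝ) : HasDerivAt (fun τ => F (a + τ * σ, p)) (G (a + τ * σ, p) * σ) τ := by
    have hline : HasDerivAt (fun τ => a + τ * σ) σ τ := by
      simpa using ((hasDerivAt_id τ).mul_const σ).const_add a
    exact (hderiv (a + τ * σ) p).comp τ hline
  obtain ⟨τ, hτ, hslope⟩ := exists_hasDerivAt_eq_slope (fun τ => F (a + τ * σ, p)) _ hpos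
    (fun τ _ => (hcurve τ).continuousAt.continuousWithinAt) fun τ _ => hcurve τ
  have hdecr : σ * G (a + τ * σ, p) < 0 := hAU ⟨(hball (hin hτ.1.le hτ.2.le)).2, hpU⟩
  have hle' : F (a, p) ≤ F (a, p₀) := by
    rcases eq_or_ne p p₀ with rfl | hp
    · exact le_rfl
    · exact (hmax p hps hp).le
  rw [eq_div_iff (by linarith), zero_mul, add_zero, sub_zero] at hslope
  nlinarith

end Maximizers

section Fibers

variable {X : Type*} [NormedAddCommGroup X] [InnerProductSpace ℝ X]

/-- The parametrization `(v, t) ↦ v + t w` of the fiber `V ⊕ ℝ w`. The half-space `0 ≤ t`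
parametrizes the closed half-fiber on which the Nehari–Pankov construction maximizes. -/
noncomputable def fiberMap (V : Submodule ℝ X) (w : X) : V × ℝ →L[ℝ] X :=
  V.subtypeL.coprod (ContinuousLinearMap.toSpanSingleton ℝ w)

variable {V : Submodule ℝ X}

theorem fiberMap_apply (w : X) (p : V × ℝ) : fiberMap V w p = p.1 + p.2 • w := rfl

theorem continuous_fiberMap : Continuous fun x : X × (V × ℝ) => fiberMap V x.1 x.2 := by
  simp only [fiberMap_apply]
  fun_prop

theorem fiberMap_ne_zero {w : X} (hw : w ∉ V) {p : V × ℝ} (hp : p ≠ 0) : fiberMap V w p ≠ 0 := by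
  intro h
  rw [fiberMap_apply, add_eq_zero_iff_eq_neg'] at h
  have ht : p.2 = 0 := by
    by_contra ht
    refine hw ((V.smul_mem_iff ht).1 ?_)
    exact h ▸ V.neg_mem p.1.2
  refine hp (Prod.ext (Subtype.ext ?_) ht)
  simpa [ht, eq_comm] using h

theorem fiberMap_smul (w : X) (c : ℝ) (p : V × ℝ) :
    fiberMap V (c • w) p = fiberMap V w (p.1, p.2 * c) := by
  simp only [fiberMap_apply, smul_smul]

theorem isClosed_halfFiber : IsClosed {p : V × ℝ | 0 ≤ p.2} :=
  isClosed_le continuous_const continuous_snd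

theorem notMem_of_mem_orthogonal {w : X} (hw : w ∈ Vᗮ) (hw0 : w ≠ 0) : w ∉ V :=
  fun h => hw0 (V.disjoint_def.1 V.orthogonal_disjoint w h hw)

end Fibers

section Action

variable {X H : Type*} [NormedAddCommGroup X] [InnerProductSpace ℝ X]
  [NormedAddCommGroup H] [InnerProductSpace ℝ H]

/-- Assumptions (I1)–(I4) on the nonlinearity `I`, with Fréchet derivative `I'`. -/
structure IsSuperquadratic (I : X → ℝ) (I' : X → X →L[ℝ] ℝ) : Prop where
  hasFDerivAt : ∀ u, HasFDerivAt I (I' u) u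
  continuous_fderiv : Continuous I'
  tendsto_of_weakTendsto : ∀ (u : ℕ → X) (a : X), WeakTendsto u atTop a →
    Tendsto (fun i => I (u i)) atTop (𝓝 (I a))
  map_zero : I 0 = 0
  pos : ∀ u, u ≠ 0 → 0 < I u
  monotoneOn : ∀ u, u ≠ 0 → MonotoneOn (fun t : ℝ => I (t • u) / t ^ 2) (Ioi 0)
  tendsto_zero : ∀ u, u ≠ 0 → Tendsto (fun t : ℝ => I (t • u) / t ^ 2) (𝓝[>] 0) (𝓝 0)
  tendsto_atTop : ∀ u, u ≠ 0 → Tendsto (fun t : ℝ => I (t • u) / t ^ 2) atTop atTop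
  fiber_le : ∀ u, u ≠ 0 → ∀ v, ∀ s : ℝ, -1 ≤ s →
    I u - I ((1 + s) • u + v) + I' u ((s * (s / 2 + 1)) • u + (1 + s) • v) ≤ 0
  fiber_lt : ∀ u, u ≠ 0 → ∀ s : ℝ, -1 ≤ s → s ≠ 0 →
    I u - I ((1 + s) • u) + I' u ((s * (s / 2 + 1)) • u) < 0

/-- The action `J_λ(u) = ½ q_λ(u, u) - I(u)`, where `j` embeds the energy space into `H`. In terms
of the energy norm, `q_λ(u, u) = ‖u‖² - (1 + λ) ‖j u‖²`: the parameter is `Λ = 1 + λ`. -/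
noncomputable def action (j : X →L[ℝ] H) (I : X → ℝ) (Λ : ℝ) (u : X) : ℝ :=
  (‖u‖ ^ 2 - Λ * ‖j u‖ ^ 2) / 2 - I u

/-- The Fréchet derivative of `action j I Λ` at `u`, when `I' u` is that of `I`. -/
noncomputable def actionDeriv (j : X →L[ℝ] H) (I' : X → X →L[ℝ] ℝ) (Λ : ℝ) (u : X) : X →L[ℝ] ℝ :=
  innerSL ℝ u - Λ • (innerSL ℝ (j u) ∘L j) - I' u

/-- The maximal action over the closed half-fiber through `w`. The supremum is attained for `w ∉ V`
and superquadratic `I`; it has a junk value if the action is unbounded on the half-fiber. -/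
noncomputable def reducedAction (j : X →L[ℝ] H) (I : X → ℝ) (V : Submodule ℝ X) (Λ : ℝ) (w : X) :
    ℝ :=
  sSup ((fun p => action j I Λ (fiberMap V w p)) '' {p | 0 ≤ p.2})

variable {j : X →L[ℝ] H} {I : X → ℝ} {I' : X → X →L[ℝ] ℝ} {V : Submodule ℝ X} {Λ : ℝ} {u w : X}

theorem actionDeriv_apply (x : X) :
    actionDeriv j I' Λ u x = ⟪u, x⟫_ℝ - Λ * ⟪j u, j x⟫_ℝ - I' u x := rfl

theorem hasDerivAt_action (hI : HasFDerivAt I (I' u) u) {ℓ : ℝ → ℝ} {ℓ' : ℝ} {c : ℝ → X} {c' : X}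
    {t : ℝ} (hℓ : HasDerivAt ℓ ℓ' t) (hc : HasDerivAt c c' t) (hu : c t = u) :
    HasDerivAt (fun τ => action j I (ℓ τ) (c τ))
      (actionDeriv j I' (ℓ t) u c' - ℓ' * ‖j u‖ ^ 2 / 2) t := by
  subst hu
  have hjc : HasDerivAt (fun τ => j (c τ)) (j c') t := j.hasFDerivAt.comp_hasDerivAt t hc
  refine ((((hc.norm_sq).sub (hℓ.mul hjc.norm_sq)).div_const 2).sub
    (hI.comp_hasDerivAt t hc)).congr_deriv ?_
  rw [actionDeriv_apply]
  ring

theorem action_zero_right (hI0 : I 0 = 0) : action j I Λ 0 = 0 := by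
  simp [action, hI0]

theorem action_smul (t : ℝ) :
    action j I Λ (t • u) = t ^ 2 * ((‖u‖ ^ 2 - Λ * ‖j u‖ ^ 2) / 2) - I (t • u) := by
  simp only [action, map_smul, norm_smul, mul_pow, Real.norm_eq_abs, sq_abs]
  ring

namespace IsSuperquadratic

theorem continuous (hI : IsSuperquadratic I I') : Continuous I :=
  continuous_iff_continuousAt.2 fun u => (hI.hasFDerivAt u).continuousAt

theorem nonneg (hI : IsSuperquadratic I I') (u : X) : 0 ≤ I u := by
  rcases eq_or_ne u 0 with rfl | hu
  · exact hI.map_zero.ge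
  · exact (hI.pos u hu).le

theorem isLittleO [CompleteSpace X] (hI : IsSuperquadratic I I') :
    I =o[𝓝 0] fun u => ‖u‖ ^ 2 := by
  refine Asymptotics.isLittleO_iff.2 fun ε hε => ?_
  by_contra hcon
  obtain ⟨u, hu, hlarge⟩ := exists_seq_forall_of_frequently (not_eventually.1 hcon)
  simp only [not_le, Real.norm_eq_abs, abs_of_nonneg (hI.nonneg _), abs_sq] at hlarge
  have hpos (i : ℕ) : 0 < ‖u i‖ := by
    refine norm_pos_iff.2 fun h0 => ?_
    have := hlarge i
    simp [h0, hI.map_zero] at this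
  let w (i : ℕ) : X := ‖u i‖⁻¹ • u i
  have hw (i : ℕ) : ‖w i‖ = 1 := by
    rw [norm_smul, norm_inv, norm_norm, inv_mul_cancel₀ (hpos i).ne']
  have huw (i : ℕ) : ‖u i‖ • w i = u i := smul_inv_smul₀ (hpos i).ne' _
  obtain ⟨x, φ, hφ, hx⟩ := exists_subseq_weakTendsto fun i => (hw i).le
  have hray (t : ℝ) (ht : 0 < t) : ε ≤ I (t • x) / t ^ 2 := by
    have hlim : Tendsto (fun i => I (t • w (φ i)) / t ^ 2) atTop (𝓝 (I (t • x) / t ^ 2)) := by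
      refine (hI.tendsto_of_weakTendsto _ _ fun ψ => ?_).div_const _
      simpa only [map_smul, Function.comp_apply] using (hx ψ).const_smul t
    refine ge_of_tendsto hlim ?_
    have hnorm : Tendsto (fun i => ‖u (φ i)‖) atTop (𝓝 0) :=
      tendsto_zero_iff_norm_tendsto_zero.1 (hu.comp hφ.tendsto_atTop)
    filter_upwards [hnorm.eventually_lt_const ht] with i hi
    have hne : w (φ i) ≠ 0 := norm_ne_zero_iff.1 (by rw [hw]; exact one_ne_zero)
    calc ε ≤ I (u (φ i)) / ‖u (φ i)‖ ^ 2 := (le_div_iff₀ (pow_pos (hpos _) 2)).2 (hlarge _).le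
      _ = I (‖u (φ i)‖ • w (φ i)) / ‖u (φ i)‖ ^ 2 := by rw [huw]
      _ ≤ I (t • w (φ i)) / t ^ 2 := hI.monotoneOn _ hne (hpos _) ht hi.le
  rcases eq_or_ne x 0 with rfl | hx0
  · have := hray 1 one_pos
    rw [smul_zero, hI.map_zero, zero_div] at this
    exact this.not_gt hε
  · obtain ⟨t, hlt, ht⟩ :=
      (((hI.tendsto_zero x hx0).eventually_lt_const hε).and self_mem_nhdsWithin).exists
    exact (hray t ht).not_gt hlt

theorem continuous_action (hI : IsSuperquadratic I I') :
    Continuous fun x : ℝ × X => action j I x.1 x.2 := by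
  have := hI.continuous
  unfold action
  fun_prop

theorem continuous_action_fiberMap (hI : IsSuperquadratic I I') :
    Continuous fun x : (ℝ × X) × (V × ℝ) => action j I x.1.1 (fiberMap V x.1.2 x.2) :=
  hI.continuous_action.comp <| (continuous_fst.comp continuous_fst).prodMk <|
    continuous_fiberMap.comp ((continuous_snd.comp continuous_fst).prodMk continuous_snd)

theorem eventually_action_smul_le (hI : IsSuperquadratic I I') (hu : u ≠ 0) :
    ∀ᶠ x : ℝ × (ℝ × X) in atTop ×ˢ 𝓝 (Λ, u), action j I x.2.1 (x.1 • x.2.2) ≤ -x.1 ^ 2 := by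
  obtain ⟨T, hT, hT0⟩ := (((hI.tendsto_atTop u hu).eventually_gt_atTop
    ((‖u‖ ^ 2 - Λ * ‖j u‖ ^ 2) / 2 + 1)).and (eventually_gt_atTop 0)).exists
  let g (y : ℝ × X) : ℝ := (‖y.2‖ ^ 2 - y.1 * ‖j y.2‖ ^ 2) / 2 - I (T • y.2) / T ^ 2
  have hg : Continuous g := by
    have := hI.continuous
    fun_prop
  have hlt : g (Λ, u) < -1 := by
    simp only [g]; linarith
  filter_upwards [tendsto_snd.eventually (hg.continuousAt.eventually_lt_const hlt),
    tendsto_snd.eventually (continuous_snd.continuousAt.eventually_ne hu),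
    tendsto_fst.eventually (eventually_ge_atTop T)] with ⟨t, Λ', u'⟩ hgt hne hle
  have ht : 0 < t := hT0.trans_le hle
  have hmono : I (T • u') / T ^ 2 ≤ I (t • u') / t ^ 2 := hI.monotoneOn u' hne hT0 ht hle
  have hsmul : action j I Λ' (t • u') =
      t ^ 2 * ((‖u'‖ ^ 2 - Λ' * ‖j u'‖ ^ 2) / 2 - I (t • u') / t ^ 2) := by
    rw [action_smul]
    field_simp
  have hbr : (‖u'‖ ^ 2 - Λ' * ‖j u'‖ ^ 2) / 2 - I (t • u') / t ^ 2 ≤ -1 := by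
    simp only [g] at hgt; linarith
  rw [hsmul]
  nlinarith [sq_nonneg t]

variable [FiniteDimensional ℝ V]

theorem tendsto_action_fiberMap (hI : IsSuperquadratic I I') (hw : w ∉ V) :
    Tendsto (fun x : (ℝ × X) × (V × ℝ) => action j I x.1.1 (fiberMap V x.1.2 x.2))
      (𝓝 (Λ, w) ×ˢ cocompact (V × ℝ)) atBot := by
  have : ProperSpace V := FiniteDimensional.proper ℝ V
  set S := Metric.sphere (0 : V × ℝ) 1
  have hsphere : ∀ᶠ y : (ℝ × (ℝ × X)) × (V × ℝ) in (atTop ×ˢ 𝓝 (Λ, w)) ×ˢ 𝓝ˢ S,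
      action j I y.1.2.1 (y.1.1 • fiberMap V y.1.2.2 y.2) ≤ -y.1.1 ^ 2 := by
    refine (isCompact_sphere 0 1).mem_prod_nhdsSet_of_forall fun p hp => ?_
    have hp0 : p ≠ 0 := ne_zero_of_mem_unit_sphere ⟨p, hp⟩
    have hlim : Tendsto (fun y : (ℝ × (ℝ × X)) × (V × ℝ) =>
        (y.1.1, (y.1.2.1, fiberMap V y.1.2.2 y.2))) ((atTop ×ˢ 𝓝 (Λ, w)) ×ˢ 𝓝 p)
        (atTop ×ˢ 𝓝 (Λ, fiberMap V w p)) := by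
      have hcont : Continuous fun z : (ℝ × X) × (V × ℝ) => (z.1.1, fiberMap V z.1.2 z.2) :=
        (continuous_fst.comp continuous_fst).prodMk <|
          continuous_fiberMap.comp ((continuous_snd.comp continuous_fst).prodMk continuous_snd)
      have hsnd : Tendsto (fun y : (ℝ × (ℝ × X)) × (V × ℝ) => (y.1.2, y.2))
          ((atTop ×ˢ 𝓝 (Λ, w)) ×ˢ 𝓝 p) (𝓝 ((Λ, w), p)) := by
        rw [nhds_prod_eq (x := (Λ, w)) (y := p)]
        exact (tendsto_snd.comp tendsto_fst).prodMk tendsto_snd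
      exact (tendsto_fst.comp tendsto_fst).prodMk ((hcont.tendsto ((Λ, w), p)).comp hsnd)
    exact hlim.eventually (hI.eventually_action_smul_le (fiberMap_ne_zero hw hp0))
  have hnorm : Tendsto (fun x : (ℝ × X) × (V × ℝ) => ‖x.2‖)
      (𝓝 (Λ, w) ×ˢ cocompact (V × ℝ)) atTop := tendsto_norm_cocompact_atTop.comp tendsto_snd
  have hpolar : Tendsto (fun x : (ℝ × X) × (V × ℝ) => ((‖x.2‖, x.1), ‖x.2‖⁻¹ • x.2))
      (𝓝 (Λ, w) ×ˢ cocompact (V × ℝ)) ((atTop ×ˢ 𝓝 (Λ, w)) ×ˢ 𝓝ˢ S) := by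
    refine (hnorm.prodMk tendsto_fst).prodMk ((tendsto_principal.2 ?_).mono_right
      principal_le_nhdsSet)
    filter_upwards [hnorm.eventually_gt_atTop 0] with x hx
    rw [mem_sphere_zero_iff_norm, norm_smul, norm_inv, norm_norm, inv_mul_cancel₀ hx.ne']
  refine tendsto_atBot_mono' _ ?_ (tendsto_neg_atTop_atBot.comp
    ((tendsto_pow_atTop two_ne_zero).comp hnorm))
  filter_upwards [hpolar.eventually hsphere, hnorm.eventually_gt_atTop 0] with x hx hpos
  rwa [← map_smul, smul_inv_smul₀ hpos.ne'] at hx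

theorem exists_isMaxOn (hI : IsSuperquadratic I I') (hw : w ∉ V) (Λ : ℝ) :
    ∃ p : V × ℝ, 0 ≤ p.2 ∧ IsMaxOn (fun p => action j I Λ (fiberMap V w p)) {p | 0 ≤ p.2} p := by
  have hslice : Tendsto (fun p : V × ℝ => ((Λ, w), p)) (cocompact (V × ℝ))
      (𝓝 (Λ, w) ×ˢ cocompact (V × ℝ)) := tendsto_const_nhds.prodMk tendsto_id
  have hcoer : Tendsto (fun p => action j I Λ (fiberMap V w p)) (cocompact (V × ℝ)) atBot := by
    simpa only [Function.comp_def] using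
      (hI.tendsto_action_fiberMap (j := j) (Λ := Λ) hw).comp hslice
  have hcont : Continuous fun p => action j I Λ (fiberMap V w p) :=
    hI.continuous_action.comp (continuous_const.prodMk (fiberMap V w).continuous)
  have hfar : ∀ᶠ p in cocompact (V × ℝ) ⊓ 𝓟 {p | 0 ≤ p.2},
      action j I Λ (fiberMap V w p) ≤ action j I Λ (fiberMap V w 0) :=
    (hcoer.eventually_le_atBot _).filter_mono inf_le_left
  have hzero : (0 : V × ℝ) ∈ {p : V × ℝ | 0 ≤ p.2} := by simp
  exact hcont.continuousOn.exists_isMaxOn' isClosed_halfFiber hzero hfar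

theorem isGreatest_reducedAction (hI : IsSuperquadratic I I') (hw : w ∉ V) (Λ : ℝ) :
    IsGreatest ((fun p => action j I Λ (fiberMap V w p)) '' {p | 0 ≤ p.2})
      (reducedAction j I V Λ w) := by
  obtain ⟨p, hp, hmax⟩ := hI.exists_isMaxOn (j := j) hw Λ
  have h : IsGreatest ((fun p => action j I Λ (fiberMap V w p)) '' {p | 0 ≤ p.2})
      (action j I Λ (fiberMap V w p)) :=
    ⟨mem_image_of_mem _ hp, forall_mem_image.2 fun q hq => hmax hq⟩
  simpa only [reducedAction, h.csSup_eq] using h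

theorem action_le_reducedAction (hI : IsSuperquadratic I I') (hw : w ∉ V) {p : V × ℝ}
    (hp : 0 ≤ p.2) : action j I Λ (fiberMap V w p) ≤ reducedAction j I V Λ w :=
  (hI.isGreatest_reducedAction hw Λ).2 (mem_image_of_mem _ hp)

theorem action_smul_le_reducedAction (hI : IsSuperquadratic I I') (hw : w ∉ V) {t : ℝ}
    (ht : 0 ≤ t) : action j I Λ (t • w) ≤ reducedAction j I V Λ w := by
  simpa [fiberMap_apply] using hI.action_le_reducedAction (j := j) (Λ := Λ) hw (p := (0, t)) ht

theorem reducedAction_nonneg (hI : IsSuperquadratic I I') (hw : w ∉ V) :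
    0 ≤ reducedAction j I V Λ w := by
  simpa [action_zero_right hI.map_zero] using
    hI.action_smul_le_reducedAction (j := j) (Λ := Λ) hw le_rfl

end IsSuperquadratic

theorem reducedAction_smul {c : ℝ} (hc : 0 < c) :
    reducedAction j I V Λ (c • w) = reducedAction j I V Λ w := by
  refine congrArg sSup (Set.Subset.antisymm ?_ ?_)
  · rintro - ⟨p, hp, rfl⟩
    exact ⟨(p.1, p.2 * c), mul_nonneg hp hc.le, by simp only [fiberMap_smul]⟩
  · rintro - ⟨p, hp, rfl⟩
    refine ⟨(p.1, p.2 / c), div_nonneg hp hc.le, ?_⟩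
    simp only [fiberMap_smul, div_mul_cancel₀ _ hc.ne']

end Action

section SpectralGap

variable {X H : Type*} [NormedAddCommGroup X] [InnerProductSpace ℝ X]
  [NormedAddCommGroup H] [InnerProductSpace ℝ H]

/-- `(α, β)` is a gap, at `V`, of the spectrum of the operator represented by the energy form
`⟪u, v⟫` relative to `⟪j u, j v⟫`: the Rayleigh quotient `‖u‖² / ‖j u‖²` is at most `α` on `V` and
at least `β` on `Vᗮ`, and `β` is an eigenvalue with an eigenvector in `Vᗮ`. -/
structure IsSpectralGap (j : X →L[ℝ] H) (V : Submodule ℝ X) (α β : ℝ) : Prop where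
  nonneg : 0 ≤ α
  lt : α < β
  norm_sq_le : ∀ v ∈ V, ‖v‖ ^ 2 ≤ α * ‖j v‖ ^ 2
  le_norm_sq : ∀ w ∈ Vᗮ, β * ‖j w‖ ^ 2 ≤ ‖w‖ ^ 2
  exists_eigenvector : ∃ z ∈ Vᗮ, z ≠ 0 ∧ ∀ x, ⟪z, x⟫_ℝ = β * ⟪j z, j x⟫_ℝ

variable {j : X →L[ℝ] H} {I : X → ℝ} {I' : X → X →L[ℝ] ℝ} {V : Submodule ℝ X} {α β Λ : ℝ}

namespace IsSpectralGap

theorem pos (hV : IsSpectralGap j V α β) : 0 < β := hV.nonneg.trans_lt hV.lt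

theorem coercive (hV : IsSpectralGap j V α β) (hΛ : 0 ≤ Λ) {w : X} (hw : w ∈ Vᗮ) :
    (1 - Λ / β) * ‖w‖ ^ 2 ≤ ‖w‖ ^ 2 - Λ * ‖j w‖ ^ 2 := by
  have hj : ‖j w‖ ^ 2 ≤ ‖w‖ ^ 2 / β := (le_div_iff₀' hV.pos).2 (hV.le_norm_sq w hw)
  have := mul_le_mul_of_nonneg_left hj hΛ
  linear_combination this

theorem exists_pos_le_reducedAction [CompleteSpace X] [FiniteDimensional ℝ V]
    (hV : IsSpectralGap j V α β) (hI : IsSuperquadratic I I') (hΛ : 0 ≤ Λ) (hΛβ : Λ < β) :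
    ∃ d > 0, ∀ w ∈ Vᗮ, w ≠ 0 → d ≤ reducedAction j I V Λ w := by
  have hκ : 0 < 1 - Λ / β := sub_pos.2 ((div_lt_one hV.pos).2 hΛβ)
  set κ := 1 - Λ / β
  obtain ⟨ε, hε, hball⟩ := Metric.eventually_nhds_iff.1
    (Asymptotics.isLittleO_iff.1 hI.isLittleO (by positivity : 0 < κ / 4))
  set r := ε / 2
  have hr : 0 < r := half_pos hε
  have hsphere (u : X) (hu : u ∈ Vᗮ) (hur : ‖u‖ = r) : κ / 4 * r ^ 2 ≤ action j I Λ u := by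
    have hsmall : I u ≤ κ / 4 * r ^ 2 := by
      have := hball (y := u) (by rw [dist_zero_right, hur]; exact half_lt_self hε)
      rw [hur, Real.norm_eq_abs, abs_of_nonneg (hI.nonneg u)] at this
      simpa using this
    have hquad := hV.coercive hΛ hu
    rw [hur] at hquad
    rw [action, hur]
    linarith
  refine ⟨κ / 4 * r ^ 2, by positivity, fun w hw hw0 => ?_⟩
  have hnorm : ‖(r / ‖w‖) • w‖ = r := by
    rw [norm_smul, norm_div, norm_norm, div_mul_cancel₀ _ (norm_ne_zero_iff.2 hw0),
      Real.norm_of_nonneg hr.le]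
  exact (hsphere _ (Vᗮ.smul_mem _ hw) hnorm).trans
    (hI.action_smul_le_reducedAction (notMem_of_mem_orthogonal hw hw0) (by positivity))

theorem action_fiberMap_le (hV : IsSpectralGap j V α β) (hΛ : α ≤ Λ) {z : X} (hz : z ∈ Vᗮ)
    (heig : ∀ x, ⟪z, x⟫_ℝ = β * ⟪j z, j x⟫_ℝ) (p : V × ℝ) :
    action j I Λ (fiberMap V z p) ≤
      (β - Λ) * (p.2 ^ 2 * ‖j z‖ ^ 2 / 2) - I (fiberMap V z p) := by
  have horth : ⟪(p.1 : X), z⟫_ℝ = 0 := V.inner_right_of_mem_orthogonal p.1.2 hz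
  have hjorth : ⟪j p.1, j z⟫_ℝ = 0 := by
    have := heig p.1
    rw [real_inner_comm, horth, real_inner_comm] at this
    exact (mul_eq_zero.1 this.symm).resolve_left hV.pos.ne'
  have hz2 : ‖z‖ ^ 2 = β * ‖j z‖ ^ 2 := by
    simpa only [real_inner_self_eq_norm_sq] using heig z
  have hlow : ‖(p.1 : X)‖ ^ 2 ≤ Λ * ‖j p.1‖ ^ 2 :=
    (hV.norm_sq_le _ p.1.2).trans (mul_le_mul_of_nonneg_right hΛ (sq_nonneg _))
  have hquad : ‖fiberMap V z p‖ ^ 2 - Λ * ‖j (fiberMap V z p)‖ ^ 2 =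
      ‖(p.1 : X)‖ ^ 2 - Λ * ‖j p.1‖ ^ 2 + p.2 ^ 2 * (β - Λ) * ‖j z‖ ^ 2 := by
    simp only [fiberMap_apply, map_add, map_smul, norm_add_sq_real, inner_smul_right, horth,
      hjorth, norm_smul, mul_pow, hz2, Real.norm_eq_abs, sq_abs]
    ring
  rw [action, hquad]
  linarith

theorem eventually_reducedAction_le [FiniteDimensional ℝ V] (hV : IsSpectralGap j V α β)
    (hI : IsSuperquadratic I I') {z : X} (hz : z ∈ Vᗮ) (hz0 : z ≠ 0)
    (heig : ∀ x, ⟪z, x⟫_ℝ = β * ⟪j z, j x⟫_ℝ) {η : ℝ} (hη : 0 < η) :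
    ∀ᶠ Λ in 𝓝[<] β, reducedAction j I V Λ z ≤ η * (β - Λ) := by
  have hzV := notMem_of_mem_orthogonal hz hz0
  let f (x : ℝ × (V × ℝ)) : ℝ := action j I x.1 (fiberMap V z x.2)
  have hf : Continuous f :=
    hI.continuous_action.comp
      (continuous_fst.prodMk ((fiberMap V z).continuous.comp continuous_snd))
  have hf0 : f (β, 0) = 0 := by simp only [f, map_zero, action_zero_right hI.map_zero]
  have hmax (p : V × ℝ) (hp : p ≠ 0) : f (β, p) < f (β, 0) := by
    have := hV.action_fiberMap_le (I := I) hV.lt.le hz heig p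
    rw [hf0]
    linarith [hI.pos _ (fiberMap_ne_zero hzV hp)]
  have hcoer : ∀ᶠ x in 𝓝 β ×ˢ cocompact (V × ℝ), f x < f (β, 0) := by
    have hpair : Tendsto (fun x : ℝ × (V × ℝ) => ((x.1, z), x.2)) (𝓝 β ×ˢ cocompact (V × ℝ))
        (𝓝 (β, z) ×ˢ cocompact (V × ℝ)) :=
      (tendsto_fst.prodMk_nhds tendsto_const_nhds).prodMk tendsto_snd
    exact hpair.eventually ((hI.tendsto_action_fiberMap (j := j) hzV).eventually_lt_atBot _)
  have hU : {p : V × ℝ | p.2 ^ 2 * ‖j z‖ ^ 2 / 2 < η} ∈ 𝓝 0 := by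
    have hcont : Continuous fun p : V × ℝ => p.2 ^ 2 * ‖j z‖ ^ 2 / 2 := by fun_prop
    exact hcont.continuousAt.eventually_lt_const (by simpa using hη)
  have hpersist := eventually_forall_le_imp_mem_of_unique_max hf isClosed_univ
    (fun p _ => hmax p) hcoer hU
  filter_upwards [nhdsWithin_le_nhds hpersist, nhdsWithin_le_nhds (lt_mem_nhds hV.lt),
    self_mem_nhdsWithin] with Λ hnear hα hβ
  rw [mem_Iio, ← sub_pos] at hβ
  obtain ⟨p, -, hp⟩ := (hI.isGreatest_reducedAction (j := j) hzV Λ).1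
  rw [← hp]
  rcases lt_or_ge (f (Λ, p)) (f (β, 0)) with h | h
  · exact (h.trans_eq hf0).le.trans (by positivity)
  · have hpU : p.2 ^ 2 * ‖j z‖ ^ 2 / 2 < η := hnear p trivial h
    have hle := hV.action_fiberMap_le (I := I) hα.le hz heig p
    have := mul_lt_mul_of_pos_left hpU hβ
    linarith [hI.nonneg (fiberMap V z p)]

theorem action_le_of_weakTendsto (hV : IsSpectralGap j V α β) (hI : IsSuperquadratic I I')
    {u : ℕ → X} {a : X} (hu : WeakTendsto u atTop a) (huV : ∀ i, u i - a ∈ Vᗮ)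
    {ℓ : ℕ → ℝ} (hℓ : Tendsto ℓ atTop (𝓝 Λ)) (hℓβ : ∀ i, ℓ i ∈ Icc 0 β)
    {c : ℕ → ℝ} {c₀ : ℝ} (hc : Tendsto c atTop (𝓝 c₀)) (hle : ∀ i, action j I (ℓ i) (u i) ≤ c i) :
    action j I Λ a ≤ c₀ := by
  -- The quadratic part is nonnegative at `u i - a`, so it dominates its tangent at `a`.
  have htangent (i : ℕ) : (2 * (⟪a, u i⟫_ℝ - ℓ i * ⟪j a, j (u i)⟫_ℝ)
      - (‖a‖ ^ 2 - ℓ i * ‖j a‖ ^ 2)) / 2 - I (u i) ≤ c i := by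
    have hnonneg : 0 ≤ ‖u i - a‖ ^ 2 - ℓ i * ‖j (u i - a)‖ ^ 2 :=
      (mul_nonneg (sub_nonneg.2 ((div_le_one hV.pos).2 (hℓβ i).2)) (sq_nonneg _)).trans
        (hV.coercive (hℓβ i).1 (huV i))
    rw [map_sub, norm_sub_sq_real, norm_sub_sq_real, real_inner_comm, real_inner_comm (j a)]
      at hnonneg
    have := hle i
    rw [action] at this
    linarith
  have hja : Tendsto (fun i => ⟪j a, j (u i)⟫_ℝ) atTop (𝓝 ⟪j a, j a⟫_ℝ) :=
    hu (innerSL ℝ (j a) ∘L j)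
  have hlim := ((((hu.inner a).sub (hℓ.mul hja)).const_mul 2).sub
    ((hℓ.mul_const (‖j a‖ ^ 2)).const_sub (‖a‖ ^ 2))).div_const 2 |>.sub
    (hI.tendsto_of_weakTendsto u a hu)
  refine (Eq.le ?_).trans (le_of_tendsto_of_tendsto' hlim hc htangent)
  rw [action, real_inner_self_eq_norm_sq, real_inner_self_eq_norm_sq]
  ring

variable [FiniteDimensional ℝ V]

theorem reducedAction_le_of_weakTendsto (hV : IsSpectralGap j V α β) (hI : IsSuperquadratic I I')
    {w : ℕ → X} {x : X} (hwV : ∀ i, w i ∈ Vᗮ) (hw0 : ∀ i, w i ≠ 0) (hw : WeakTendsto w atTop x)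
    (hx0 : x ≠ 0) {ℓ : ℕ → ℝ} (hℓ : Tendsto ℓ atTop (𝓝 Λ)) (hℓβ : ∀ i, ℓ i ∈ Icc 0 β)
    {c : ℕ → ℝ} {c₀ : ℝ} (hc : Tendsto c atTop (𝓝 c₀))
    (hle : ∀ i, reducedAction j I V (ℓ i) (w i) ≤ c i) : reducedAction j I V Λ x ≤ c₀ := by
  have hxV : x ∈ Vᗮ := hw.mem_orthogonal hwV
  obtain ⟨p, hp, hpx⟩ :=
    (hI.isGreatest_reducedAction (j := j) (notMem_of_mem_orthogonal hxV hx0) Λ).1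
  rw [← hpx]
  refine hV.action_le_of_weakTendsto hI (u := fun i => fiberMap V (w i) p) (fun ψ => ?_)
    (fun i => ?_) hℓ hℓβ hc fun i => ?_
  · simpa only [fiberMap_apply, map_add, map_smul] using ((hw ψ).const_smul p.2).const_add (ψ p.1)
  · rw [fiberMap_apply, fiberMap_apply, add_sub_add_left_eq_sub, ← smul_sub]
    exact Vᗮ.smul_mem _ (Vᗮ.sub_mem (hwV i) hxV)
  · exact (hI.action_le_reducedAction (notMem_of_mem_orthogonal (hwV i) (hw0 i)) hp).trans (hle i)

theorem weak_limit_ne_zero (hV : IsSpectralGap j V α β) (hI : IsSuperquadratic I I')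
    {w : ℕ → X} {x : X} (hwV : ∀ i, w i ∈ Vᗮ) (hw1 : ∀ i, ‖w i‖ = 1) (hw : WeakTendsto w atTop x)
    {ℓ : ℕ → ℝ} {l₁ : ℝ} (hl₁ : l₁ < β) (hℓ : ∀ i, ℓ i ∈ Icc 0 l₁)
    (hbdd : BddAbove (range fun i => reducedAction j I V (ℓ i) (w i))) : x ≠ 0 := by
  rintro rfl
  obtain ⟨c, hc⟩ := hbdd
  have hκ : 0 < 1 - l₁ / β := sub_pos.2 ((div_lt_one hV.pos).2 hl₁)
  set κ := 1 - l₁ / β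
  have hbound (t : ℝ) (ht : 0 ≤ t) : t ^ 2 * (κ / 2) ≤ c := by
    have hlim : Tendsto (fun i => t ^ 2 * (κ / 2) - I (t • w i)) atTop
        (𝓝 (t ^ 2 * (κ / 2) - I (t • (0 : X)))) := by
      refine (hI.tendsto_of_weakTendsto _ _ fun ψ => ?_).const_sub _
      simpa only [map_smul] using (hw ψ).const_smul t
    rw [smul_zero, hI.map_zero, sub_zero] at hlim
    refine le_of_tendsto' hlim fun i => ?_
    have hwi : w i ≠ 0 := norm_ne_zero_iff.1 (by rw [hw1]; exact one_ne_zero)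
    have hquad := hV.coercive (hℓ i).1 (hwV i)
    rw [hw1, one_pow, mul_one] at hquad
    have hκi : κ ≤ 1 - ℓ i / β :=
      sub_le_sub_left (div_le_div_of_nonneg_right (hℓ i).2 hV.pos.le) _
    calc t ^ 2 * (κ / 2) - I (t • w i)
        ≤ action j I (ℓ i) (t • w i) := by
          rw [action_smul, hw1]
          gcongr
          linarith
      _ ≤ reducedAction j I V (ℓ i) (w i) :=
          hI.action_smul_le_reducedAction (notMem_of_mem_orthogonal (hwV i) hwi) ht
      _ ≤ c := hc (mem_range_self i)
  have htop : Tendsto (fun t : ℝ => t ^ 2 * (κ / 2)) atTop atTop :=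
    (tendsto_pow_atTop two_ne_zero).atTop_mul_const (half_pos hκ)
  obtain ⟨t, hgt, ht⟩ := ((htop.eventually_gt_atTop c).and (eventually_ge_atTop 0)).exists
  exact (hbound t ht).not_gt hgt

end IsSpectralGap

end SpectralGap

section Minimizer

variable {X H : Type*} [NormedAddCommGroup X] [InnerProductSpace ℝ X] [CompleteSpace X]
  [NormedAddCommGroup H] [InnerProductSpace ℝ H] {j : X →L[ℝ] H} {I : X → ℝ}
  {I' : X → X →L[ℝ] ℝ} {V : Submodule ℝ X} [FiniteDimensional ℝ V] {α β ν : ℝ}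

namespace IsSpectralGap

theorem exists_unit_minimizer (hV : IsSpectralGap j V α β) (hI : IsSuperquadratic I I')
    (hν : 0 ≤ ν) {l₀ l₁ : ℝ} (hl₀ : 0 ≤ l₀) (hl : l₀ ≤ l₁) (hl₁ : l₁ < β) :
    ∃ Λ ∈ Icc l₀ l₁, ∃ w ∈ Vᗮ, w ≠ 0 ∧ ∀ Λ' ∈ Icc l₀ l₁, ∀ w' ∈ Vᗮ, ‖w'‖ = 1 →
      reducedAction j I V Λ w + ν * Λ ≤ reducedAction j I V Λ' w' + ν * Λ' := by
  let Φ (x : ℝ × X) : ℝ := reducedAction j I V x.1 x.2 + ν * x.1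
  set S := Φ '' (Icc l₀ l₁ ×ˢ {w | w ∈ Vᗮ ∧ ‖w‖ = 1})
  have hne1 {w : X} (hw : ‖w‖ = 1) : w ≠ 0 := norm_ne_zero_iff.1 (by rw [hw]; exact one_ne_zero)
  have hbdd : BddBelow S := by
    refine ⟨0, forall_mem_image.2 fun x hx => add_nonneg ?_ (mul_nonneg hν (hl₀.trans hx.1.1))⟩
    exact hI.reducedAction_nonneg (notMem_of_mem_orthogonal hx.2.1 (hne1 hx.2.2))
  have hS : S.Nonempty := by
    obtain ⟨z, hz, hz0, -⟩ := hV.exists_eigenvector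
    exact ⟨_, (l₀, ‖z‖⁻¹ • z),
      ⟨left_mem_Icc.2 hl, Vᗮ.smul_mem _ hz, norm_smul_inv_norm (𝕜 := ℝ) hz0⟩, rfl⟩
  obtain ⟨m, -, hm, hmS⟩ := exists_seq_tendsto_sInf hS hbdd
  choose y hyS hym using hmS
  obtain ⟨Λ, hΛ, φ, hφ, hφΛ⟩ := isCompact_Icc.tendsto_subseq fun i => (hyS i).1
  obtain ⟨w, ψ, hψ, hw⟩ := exists_subseq_weakTendsto fun i => (hyS (φ i)).2.2.le
  have hℓ : Tendsto (fun i => (y (φ (ψ i))).1) atTop (𝓝 Λ) := hφΛ.comp hψ.tendsto_atTop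
  have hlim : Tendsto (fun i => reducedAction j I V (y (φ (ψ i))).1 (y (φ (ψ i))).2) atTop
      (𝓝 (sInf S - ν * Λ)) := by
    refine ((hm.comp (hφ.comp hψ).tendsto_atTop).sub (hℓ.const_mul ν)).congr fun i => ?_
    simp only [Φ, Function.comp_apply, ← hym, add_sub_cancel_right]
  have hwV (i : ℕ) : (y (φ (ψ i))).2 ∈ Vᗮ := (hyS _).2.1
  have hw1 (i : ℕ) : ‖(y (φ (ψ i))).2‖ = 1 := (hyS _).2.2
  have hmem (i : ℕ) : (y (φ (ψ i))).1 ∈ Icc l₀ l₁ := (hyS _).1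
  have hw0 : w ≠ 0 := hV.weak_limit_ne_zero hI hwV hw1 hw hl₁
    (fun i => ⟨hl₀.trans (hmem i).1, (hmem i).2⟩) hlim.bddAbove_range
  have hle := hV.reducedAction_le_of_weakTendsto hI hwV (fun i => hne1 (hw1 i)) hw hw0 hℓ
    (fun i => ⟨hl₀.trans (hmem i).1, (hmem i).2.trans hl₁.le⟩) hlim fun _ => le_rfl
  refine ⟨Λ, hΛ, w, hw.mem_orthogonal hwV, hw0, fun Λ' hΛ' w' hw' hw'1 => ?_⟩
  have hinf : sInf S ≤ Φ (Λ', w') := csInf_le hbdd ⟨(Λ', w'), ⟨hΛ', hw', hw'1⟩, rfl⟩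
  simp only [Φ] at hinf
  linarith

theorem exists_minimizer (hV : IsSpectralGap j V α β) (hI : IsSuperquadratic I I')
    (hν : 0 ≤ ν) {l₀ l₁ : ℝ} (hl₀ : 0 ≤ l₀) (hl : l₀ ≤ l₁) (hl₁ : l₁ < β) :
    ∃ Λ ∈ Icc l₀ l₁, ∃ w ∈ Vᗮ, w ≠ 0 ∧ ∀ Λ' ∈ Icc l₀ l₁, ∀ w' ∈ Vᗮ, w' ≠ 0 →
      reducedAction j I V Λ w + ν * Λ ≤ reducedAction j I V Λ' w' + ν * Λ' := by
  obtain ⟨Λ, hΛ, w, hw, hw0, hmin⟩ := hV.exists_unit_minimizer hI hν hl₀ hl hl₁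
  refine ⟨Λ, hΛ, w, hw, hw0, fun Λ' hΛ' w' hw' hw'0 => ?_⟩
  rw [← reducedAction_smul (w := w') (inv_pos.2 (norm_pos_iff.2 hw'0))]
  exact hmin Λ' hΛ' (‖w'‖⁻¹ • w') (Vᗮ.smul_mem _ hw') (norm_smul_inv_norm (𝕜 := ℝ) hw'0)

theorem exists_local_minimizer (hV : IsSpectralGap j V α β) (hI : IsSuperquadratic I I')
    (hν : 0 < ν) {l₀ d : ℝ} (hl₀ : 0 ≤ l₀) (hl₀β : l₀ < β)
    (hd : ∀ w ∈ Vᗮ, w ≠ 0 → d ≤ reducedAction j I V l₀ w) (hνd : ν * (β - l₀) < d) :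
    ∃ Λ ∈ Ioo l₀ β, ∃ w ∈ Vᗮ, w ≠ 0 ∧ ∀ᶠ Λ' in 𝓝 Λ, ∀ w' ∈ Vᗮ, w' ≠ 0 →
      reducedAction j I V Λ w + ν * Λ ≤ reducedAction j I V Λ' w' + ν * Λ' := by
  obtain ⟨z, hz, hz0, heig⟩ := hV.exists_eigenvector
  obtain ⟨lₜ, hle, hl₀lₜ, hlₜβ⟩ := ((hV.eventually_reducedAction_le hI hz hz0 heig
    (half_pos hν)).and (Ioo_mem_nhdsLT hl₀β)).exists
  set l₁ := (lₜ + 3 * β) / 4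
  have hl₁ : l₁ = (lₜ + 3 * β) / 4 := rfl
  -- The value at `(lₜ, z)` is below `ν l₁`, and below `d + ν l₀`: no minimum is on the boundary.
  obtain ⟨Λ, hΛ, w, hw, hw0, hmin⟩ :=
    hV.exists_minimizer hI hν.le hl₀ (l₁ := l₁) (by linarith) (by linarith)
  have hc := hmin lₜ ⟨hl₀lₜ.le, by linarith⟩ z hz hz0
  have hgap : 0 < ν * (β - lₜ) := mul_pos hν (sub_pos.2 hlₜβ)
  have hΛl₁ : Λ ≠ l₁ := by
    intro h
    have := hI.reducedAction_nonneg (j := j) (Λ := Λ) (notMem_of_mem_orthogonal hw hw0)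
    rw [show ν * Λ = ν * lₜ + 3 / 4 * (ν * (β - lₜ)) by rw [h, hl₁]; ring] at hc
    linarith
  have hΛl₀ : Λ ≠ l₀ := by
    rintro rfl
    linarith [hd w hw hw0]
  refine ⟨Λ, ⟨hΛ.1.lt_of_ne' hΛl₀, by linarith [hΛ.2]⟩, w, hw, hw0, ?_⟩
  filter_upwards [Icc_mem_nhds (hΛ.1.lt_of_ne' hΛl₀) (hΛ.2.lt_of_ne hΛl₁)] with Λ' hΛ' using
    hmin Λ' hΛ'

end IsSpectralGap

end Minimizer

section CriticalPoints

variable {X H : Type*} [NormedAddCommGroup X] [InnerProductSpace ℝ X]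
  [NormedAddCommGroup H] [InnerProductSpace ℝ H] {j : X →L[ℝ] H} {I : X → ℝ}
  {I' : X → X →L[ℝ] ℝ} {V : Submodule ℝ X} {α β ν Λ : ℝ} {u w : X} {p : V × ℝ}

theorem actionDeriv_fiberMap_eq_zero (hI : ∀ u, HasFDerivAt I (I' u) u) (hp : 0 < p.2)
    (hmax : IsMaxOn (fun p => action j I Λ (fiberMap V w p)) {p | 0 ≤ p.2} p) (q : V × ℝ) :
    actionDeriv j I' Λ (fiberMap V w p) (fiberMap V w q) = 0 := by
  have hline :
      HasDerivAt (fun τ : ℝ => fiberMap V w p + τ • fiberMap V w q) (fiberMap V w q) 0 := by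
    simpa using ((hasDerivAt_id (0 : ℝ)).smul_const (fiberMap V w q)).const_add (fiberMap V w p)
  have hderiv := hasDerivAt_action (j := j) (hI (fiberMap V w p)) (hasDerivAt_const (0 : ℝ) Λ)
    hline (by simp)
  simp only [zero_mul, zero_div, sub_zero] at hderiv
  refine IsLocalMax.hasDerivAt_eq_zero ?_ hderiv
  have hcont : Continuous fun τ : ℝ => p.2 + τ * q.2 := by fun_prop
  filter_upwards [hcont.continuousAt.eventually_const_lt
    (show 0 < p.2 + 0 * q.2 by simpa using hp)] with τ hτ
  have hle := hmax (show p + τ • q ∈ {p : V × ℝ | 0 ≤ p.2} from hτ.le)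
  simpa using hle

theorem action_add_sub_action (s : ℝ) (v : X) :
    action j I Λ ((1 + s) • u + v) - action j I Λ u = (‖v‖ ^ 2 - Λ * ‖j v‖ ^ 2) / 2
      + (I u - I ((1 + s) • u + v) + I' u ((s * (s / 2 + 1)) • u + (1 + s) • v))
      + s * (s / 2 + 1) * actionDeriv j I' Λ u u + (1 + s) * actionDeriv j I' Λ u v := by
  simp only [action, actionDeriv_apply, map_add, map_smul, smul_eq_mul, norm_add_sq_real,
    real_inner_smul_left, norm_smul, mul_pow, Real.norm_eq_abs, sq_abs, real_inner_self_eq_norm_sq]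
  ring

namespace IsSpectralGap

theorem norm_sq_lt (hV : IsSpectralGap j V α β) (hΛ : α < Λ) {v : X} (hv : v ∈ V) (hv0 : v ≠ 0) :
    ‖v‖ ^ 2 < Λ * ‖j v‖ ^ 2 := by
  have hle := hV.norm_sq_le v hv
  have hpos : 0 < ‖v‖ ^ 2 := pow_pos (norm_pos_iff.2 hv0) 2
  have hj : 0 < ‖j v‖ ^ 2 := pos_of_mul_pos_right (hpos.trans_le hle) hV.nonneg
  exact hle.trans_lt (mul_lt_mul_of_pos_right hΛ hj)

theorem action_lt_of_actionDeriv_eq_zero (hV : IsSpectralGap j V α β) (hI : IsSuperquadratic I I')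
    (hΛ : α < Λ) (hu : u ≠ 0) (hcu : actionDeriv j I' Λ u u = 0) {v : X} (hv : v ∈ V)
    (hcv : actionDeriv j I' Λ u v = 0) {s : ℝ} (hs : -1 ≤ s) (hsv : s ≠ 0 ∨ v ≠ 0) :
    action j I Λ ((1 + s) • u + v) < action j I Λ u := by
  have hexp := action_add_sub_action (j := j) (I := I) (I' := I') (Λ := Λ) (u := u) s v
  rw [hcu, hcv] at hexp
  rcases eq_or_ne v 0 with rfl | hv0
  · have := hI.fiber_lt u hu s hs (hsv.resolve_right (not_not.2 rfl))
    simp only [add_zero, smul_zero, map_zero, norm_zero] at hexp ⊢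
    linarith
  · linarith [hV.norm_sq_lt hΛ hv hv0, hI.fiber_le u hu v s hs]

theorem action_lt_of_isMaxOn (hV : IsSpectralGap j V α β) (hI : IsSuperquadratic I I')
    (hΛ : α < Λ) (hw : w ∉ V) (hp : 0 < p.2)
    (hmax : IsMaxOn (fun p => action j I Λ (fiberMap V w p)) {p | 0 ≤ p.2} p) {q : V × ℝ}
    (hq : 0 ≤ q.2) (hqp : q ≠ p) :
    action j I Λ (fiberMap V w q) < action j I Λ (fiberMap V w p) := by
  have hcrit := actionDeriv_fiberMap_eq_zero hI.hasFDerivAt hp hmax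
  have hp0 : p ≠ 0 := by
    rintro rfl
    exact hp.ne rfl
  set s := q.2 / p.2 - 1
  set v : V := q.1 - (1 + s) • p.1
  have hsp : (1 + s) * p.2 = q.2 := by rw [add_sub_cancel, div_mul_cancel₀ _ hp.ne']
  have hs : -1 ≤ s := by linarith [div_nonneg hq hp.le]
  have hqv : fiberMap V w q = (1 + s) • fiberMap V w p + v := by
    simp only [v, fiberMap_apply, ← hsp, Submodule.coe_sub, Submodule.coe_smul, smul_add, smul_smul]
    abel
  have hsv : s ≠ 0 ∨ (v : X) ≠ 0 := by
    by_contra! h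
    have hv : q.1 - (1 + s) • p.1 = 0 := Subtype.ext h.2
    rw [h.1, add_zero, one_smul, sub_eq_zero] at hv
    rw [h.1, add_zero, one_mul] at hsp
    exact hqp (Prod.ext hv hsp.symm)
  have hcv : actionDeriv j I' Λ (fiberMap V w p) v = 0 := by
    simpa [fiberMap_apply] using hcrit (v, 0)
  rw [hqv]
  exact hV.action_lt_of_actionDeriv_eq_zero hI hΛ (fiberMap_ne_zero hw hp0) (hcrit p) v.2 hcv hs hsv

variable [CompleteSpace X] [FiniteDimensional ℝ V]

theorem exists_strict_maximizer (hV : IsSpectralGap j V α β) (hI : IsSuperquadratic I I')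
    (hΛ : Λ ∈ Ioo α β) (hw : w ∈ Vᗮ) (hw0 : w ≠ 0) :
    ∃ p : V × ℝ, 0 < p.2 ∧ action j I Λ (fiberMap V w p) = reducedAction j I V Λ w ∧
      (∀ q, actionDeriv j I' Λ (fiberMap V w p) (fiberMap V w q) = 0) ∧
      ∀ q ∈ {q : V × ℝ | 0 ≤ q.2}, q ≠ p →
        action j I Λ (fiberMap V w q) < action j I Λ (fiberMap V w p) := by
  have hwV := notMem_of_mem_orthogonal hw hw0
  obtain ⟨p, hp, hpred⟩ := (hI.isGreatest_reducedAction (j := j) hwV Λ).1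
  have hmax : IsMaxOn (fun p => action j I Λ (fiberMap V w p)) {p | 0 ≤ p.2} p :=
    fun q hq => (hI.action_le_reducedAction hwV hq).trans hpred.ge
  have hpos : 0 < p.2 := by
    refine lt_of_le_of_ne' hp fun h0 => ?_
    obtain ⟨d, hd, hle⟩ := hV.exists_pos_le_reducedAction hI (hV.nonneg.trans hΛ.1.le) hΛ.2
    have hact : 0 < action j I Λ p.1 := by
      have := hd.trans_le ((hle w hw hw0).trans_eq hpred.symm)
      simpa [fiberMap_apply, h0] using this
    have hlow : ‖(p.1 : X)‖ ^ 2 ≤ Λ * ‖j p.1‖ ^ 2 :=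
      (hV.norm_sq_le _ p.1.2).trans (mul_le_mul_of_nonneg_right hΛ.1.le (sq_nonneg _))
    rw [action] at hact
    linarith [hI.nonneg (p.1 : X)]
  exact ⟨p, hpos, hpred, actionDeriv_fiberMap_eq_zero hI.hasFDerivAt hpos hmax,
    fun q hq hqp => hV.action_lt_of_isMaxOn hI hΛ.1 hwV hpos hmax hq hqp⟩

end IsSpectralGap

theorem hasDerivAt_action_fiberMap (hI : ∀ u, HasFDerivAt I (I' u) u) (ν σ : ℝ) (x : X)
    (q : V × ℝ) (t : ℝ) :
    HasDerivAt (fun τ => action j I (Λ + τ * σ) (fiberMap V (w + τ • x) q) + ν * (Λ + τ * σ))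
      (q.2 * actionDeriv j I' (Λ + t * σ) (fiberMap V (w + t • x) q) x
        - σ * ‖j (fiberMap V (w + t • x) q)‖ ^ 2 / 2 + ν * σ) t := by
  have hℓ : HasDerivAt (fun τ => Λ + τ * σ) σ t :=
    (((hasDerivAt_id t).mul_const σ).const_add Λ).congr_deriv (one_mul σ)
  have hc : HasDerivAt (fun τ : ℝ => w + τ • x) x t :=
    (((hasDerivAt_id t).smul_const x).const_add w).congr_deriv (one_smul ℝ x)
  have hfib : HasDerivAt (fun τ : ℝ => fiberMap V (w + τ • x) q) (q.2 • x) t :=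
    (hc.const_smul q.2).const_add (q.1 : X)
  refine ((hasDerivAt_action (j := j) (hI _) hℓ hfib rfl).add (hℓ.const_mul ν)).congr_deriv ?_
  rw [map_smul, smul_eq_mul]

theorem continuous_actionDeriv_fiberMap (hI' : Continuous I') (x : X) :
    Continuous fun y : (ℝ × X) × (V × ℝ) => actionDeriv j I' y.1.1 (fiberMap V y.1.2 y.2) x := by
  have hfib : Continuous fun y : (ℝ × X) × (V × ℝ) => fiberMap V y.1.2 y.2 :=
    continuous_fiberMap.comp ((continuous_snd.comp continuous_fst).prodMk continuous_snd)
  simp only [actionDeriv_apply]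
  fun_prop

variable [FiniteDimensional ℝ V]

theorem eventually_exists_le_action (hI : IsSuperquadratic I I') (hw : w ∈ Vᗮ) (hw0 : w ≠ 0)
    (hmin : ∀ᶠ Λ' in 𝓝 Λ, ∀ w' ∈ Vᗮ, w' ≠ 0 →
      reducedAction j I V Λ w + ν * Λ ≤ reducedAction j I V Λ' w' + ν * Λ')
    (σ : ℝ) {x : X} (hx : x ∈ Vᗮ) :
    ∀ᶠ t in 𝓝 (0 : ℝ), ∃ q ∈ {q : V × ℝ | 0 ≤ q.2}, reducedAction j I V Λ w + ν * Λ ≤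
      action j I (Λ + t * σ) (fiberMap V (w + t • x) q) + ν * (Λ + t * σ) := by
  have hℓ : Tendsto (fun t => Λ + t * σ) (𝓝 0) (𝓝 Λ) :=
    Continuous.tendsto' (by fun_prop) _ _ (by simp)
  have hc : Tendsto (fun t : ℝ => w + t • x) (𝓝 0) (𝓝 w) :=
    Continuous.tendsto' (by fun_prop) _ _ (by simp)
  filter_upwards [hℓ.eventually hmin, hc.eventually_ne hw0] with t ht hct
  have hctV : w + t • x ∈ Vᗮ := Vᗮ.add_mem hw (Vᗮ.smul_mem _ hx)
  obtain ⟨q, hq, hqred⟩ := (hI.isGreatest_reducedAction (j := j)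
    (notMem_of_mem_orthogonal hctV hct) (Λ + t * σ)).1
  exact ⟨q, hq, (ht _ hctV hct).trans_eq (congrArg (· + ν * (Λ + t * σ)) hqred.symm)⟩

theorem tendsto_action_fiberMap_line (hI : IsSuperquadratic I I') (hw : w ∉ V) (ν σ : ℝ) (x : X) :
    Tendsto (fun y : ℝ × (V × ℝ) =>
        action j I (Λ + y.1 * σ) (fiberMap V (w + y.1 • x) y.2) + ν * (Λ + y.1 * σ))
      (𝓝 0 ×ˢ cocompact (V × ℝ)) atBot := by
  have hbase : Tendsto (fun t : ℝ => (Λ + t * σ, w + t • x)) (𝓝 0) (𝓝 (Λ, w)) :=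
    Continuous.tendsto' (by fun_prop) _ _ (by simp)
  have hshift : Tendsto (fun t => ν * (Λ + t * σ)) (𝓝 0) (𝓝 (ν * (Λ + 0 * σ))) :=
    Continuous.tendsto (by fun_prop) 0
  exact ((hI.tendsto_action_fiberMap hw).comp
    ((hbase.comp tendsto_fst).prodMk tendsto_snd)).atBot_add (hshift.comp tendsto_fst)

theorem envelope_eq_zero (hI : IsSuperquadratic I I') (hw : w ∈ Vᗮ) (hw0 : w ≠ 0)
    (hpred : action j I Λ (fiberMap V w p) = reducedAction j I V Λ w)
    (hstrict : ∀ q ∈ {q : V × ℝ | 0 ≤ q.2}, q ≠ p →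
      action j I Λ (fiberMap V w q) < action j I Λ (fiberMap V w p))
    (hmin : ∀ᶠ Λ' in 𝓝 Λ, ∀ w' ∈ Vᗮ, w' ≠ 0 →
      reducedAction j I V Λ w + ν * Λ ≤ reducedAction j I V Λ' w' + ν * Λ')
    (σ : ℝ) {x : X} (hx : x ∈ Vᗮ) :
    p.2 * actionDeriv j I' Λ (fiberMap V w p) x
      + σ * (ν - ‖j (fiberMap V w p)‖ ^ 2 / 2) = 0 := by
  let γ (y : ℝ × (V × ℝ)) : (ℝ × X) × (V × ℝ) := ((Λ + y.1 * σ, w + y.1 • x), y.2)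
  have hγ : Continuous γ := by fun_prop
  let F (y : ℝ × (V × ℝ)) : ℝ :=
    action j I (Λ + y.1 * σ) (fiberMap V (w + y.1 • x) y.2) + ν * (Λ + y.1 * σ)
  let G (y : ℝ × (V × ℝ)) : ℝ :=
    y.2.2 * actionDeriv j I' (Λ + y.1 * σ) (fiberMap V (w + y.1 • x) y.2) x
      - σ * ‖j (fiberMap V (w + y.1 • x) y.2)‖ ^ 2 / 2 + ν * σ
  have hF : Continuous F := (hI.continuous_action_fiberMap.comp hγ).add (by fun_prop)
  have hfib : Continuous fun y : ℝ × (V × ℝ) => fiberMap V (w + y.1 • x) y.2 :=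
    continuous_fiberMap.comp ((continuous_snd.comp (continuous_fst.comp hγ)).prodMk continuous_snd)
  have hG : Continuous G :=
    (((continuous_snd.comp continuous_snd).mul ((continuous_actionDeriv_fiberMap
      hI.continuous_fderiv x).comp hγ)).sub ((((j.continuous.comp hfib).norm.pow 2).const_mul
        σ).div_const 2)).add continuous_const
  have hF0 (q : V × ℝ) : F (0, q) = action j I Λ (fiberMap V w q) + ν * Λ := by simp [F]
  have hzero : G (0, p) = 0 := eq_zero_of_min_of_max hF hG.continuousAt
    (fun t q => hasDerivAt_action_fiberMap hI.hasFDerivAt ν σ x q t) isClosed_halfFiber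
    (fun q hq hqp => by simpa only [hF0, add_lt_add_iff_right] using hstrict q hq hqp)
    ((tendsto_action_fiberMap_line hI (notMem_of_mem_orthogonal hw hw0) ν σ x).eventually_lt_atBot
      _)
    (by simpa only [hF0, hpred] using eventually_exists_le_action hI hw hw0 hmin σ hx)
  simp only [G, zero_mul, add_zero, zero_smul] at hzero
  linarith

end CriticalPoints

section NormalizedSolution

variable {X H : Type*} [NormedAddCommGroup X] [InnerProductSpace ℝ X] [CompleteSpace X]
  [NormedAddCommGroup H] [InnerProductSpace ℝ H] {j : X →L[ℝ] H} {I : X → ℝ}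
  {I' : X → X →L[ℝ] ℝ} {V : Submodule ℝ X} [FiniteDimensional ℝ V] {α β ν Λ : ℝ} {w : X}

namespace IsSpectralGap

theorem exists_actionDeriv_eq_zero (hV : IsSpectralGap j V α β) (hI : IsSuperquadratic I I')
    (hΛ : Λ ∈ Ioo α β) (hw : w ∈ Vᗮ) (hw0 : w ≠ 0)
    (hmin : ∀ᶠ Λ' in 𝓝 Λ, ∀ w' ∈ Vᗮ, w' ≠ 0 →
      reducedAction j I V Λ w + ν * Λ ≤ reducedAction j I V Λ' w' + ν * Λ') :
    ∃ u, actionDeriv j I' Λ u = 0 ∧ ‖j u‖ ^ 2 = 2 * ν := by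
  obtain ⟨p, hp, hpred, hcrit, hstrict⟩ := hV.exists_strict_maximizer hI hΛ hw hw0
  have henv (σ : ℝ) {x : X} (hx : x ∈ Vᗮ) :=
    envelope_eq_zero hI hw hw0 hpred hstrict hmin σ hx
  refine ⟨fiberMap V w p, ?_, ?_⟩
  · ext x
    obtain ⟨v, hv, y, hy, rfl⟩ := V.exists_add_mem_mem_orthogonal x
    have hv0 : actionDeriv j I' Λ (fiberMap V w p) v = 0 := by
      simpa [fiberMap_apply] using hcrit (⟨v, hv⟩, 0)
    have hy0 : actionDeriv j I' Λ (fiberMap V w p) y = 0 := by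
      simpa [hp.ne'] using henv 0 hy
    rw [map_add, hv0, hy0, add_zero, zero_apply]
  · have := henv 1 Vᗮ.zero_mem
    rw [map_zero] at this
    linarith

theorem eventually_exists_normalized_solution (hV : IsSpectralGap j V α β)
    (hI : IsSuperquadratic I I') :
    ∀ᶠ μ in 𝓝[>] (0 : ℝ), ∃ Λ ∈ Ioo α β, ∃ u,
      (∀ x, ⟪u, x⟫_ℝ - Λ * ⟪j u, j x⟫_ℝ = I' u x) ∧ ‖j u‖ = μ := by
  obtain ⟨l₀, hαl₀, hl₀β⟩ := exists_between hV.lt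
  have hl₀ : 0 ≤ l₀ := hV.nonneg.trans hαl₀.le
  obtain ⟨d, hd, hle⟩ := hV.exists_pos_le_reducedAction hI hl₀ hl₀β
  have hcont : Continuous fun μ : ℝ => μ ^ 2 / 2 * (β - l₀) := by fun_prop
  have hsmall : ∀ᶠ μ : ℝ in 𝓝 0, μ ^ 2 / 2 * (β - l₀) < d :=
    hcont.continuousAt.eventually_lt_const (by simpa using hd)
  filter_upwards [nhdsWithin_le_nhds hsmall, self_mem_nhdsWithin] with μ hμd hμ
  rw [mem_Ioi] at hμ
  obtain ⟨Λ, hΛ, w, hw, hw0, hmin⟩ :=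
    hV.exists_local_minimizer hI (by positivity) hl₀ hl₀β hle hμd
  have hΛ' : Λ ∈ Ioo α β := ⟨hαl₀.trans hΛ.1, hΛ.2⟩
  obtain ⟨u, hu, hmass⟩ := hV.exists_actionDeriv_eq_zero hI hΛ' hw hw0 hmin
  refine ⟨Λ, hΛ', u, fun x => ?_, ?_⟩
  · rw [← sub_eq_zero, ← actionDeriv_apply, hu, zero_apply]
  · exact (pow_left_inj₀ (norm_nonneg _) hμ.le two_ne_zero).1 (by linarith)

end IsSpectralGap

end NormalizedSolution

section Eigenbasis

open scoped lp

variable {X : Type*} [NormedAddCommGroup X] [InnerProductSpace ℝ X] {lam : ℕ → ℝ} {ζ : ℕ → X}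

theorem orthonormal_inv_sqrt_smul (hlam : ∀ k, -1 < lam k)
    (hON : ∀ j k, ⟪ζ j, ζ k⟫_ℝ = if j = k then 1 + lam k else 0) :
    Orthonormal ℝ fun k => (√(1 + lam k))⁻¹ • ζ k := by
  have hs (k : ℕ) : 0 < 1 + lam k := by linarith [hlam k]
  rw [orthonormal_iff_ite]
  intro i k
  rw [real_inner_smul_left, real_inner_smul_right, hON]
  split_ifs with h
  · subst h
    rw [← mul_assoc, ← mul_inv, Real.mul_self_sqrt (hs i).le, inv_mul_cancel₀ (hs i).ne']
  · rw [mul_zero, mul_zero]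

theorem exists_hilbertBasis_eq_inv_sqrt_smul [CompleteSpace X] (hlam : ∀ k, -1 < lam k)
    (hON : ∀ j k, ⟪ζ j, ζ k⟫_ℝ = if j = k then 1 + lam k else 0)
    (hdense : (Submodule.span ℝ (range ζ)).topologicalClosure = ⊤) :
    ∃ b : HilbertBasis ℕ ℝ X, ∀ k, b k = (√(1 + lam k))⁻¹ • ζ k := by
  have hspan : ⊤ ≤
      (Submodule.span ℝ (range fun k => (√(1 + lam k))⁻¹ • ζ k)).topologicalClosure := by
    rw [← hdense]
    refine Submodule.topologicalClosure_mono (Submodule.span_le.2 (range_subset_iff.2 fun k => ?_))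
    have hs : √(1 + lam k) ≠ 0 := (Real.sqrt_pos.2 (by linarith [hlam k])).ne'
    rw [← smul_inv_smul₀ hs (ζ k)]
    exact Submodule.smul_mem _ _ (Submodule.subset_span (mem_range_self k))
  exact ⟨HilbertBasis.mk (orthonormal_inv_sqrt_smul hlam hON) hspan, fun k => by
    rw [HilbertBasis.coe_mk]⟩

theorem coefH_eq {e : ℕ → X} (hlam : ∀ k, -1 < lam k)
    (he : ∀ k, e k = (√(1 + lam k))⁻¹ • ζ k) (u : X) (k : ℕ) :
    coefH lam ζ u k = (√(1 + lam k))⁻¹ * ⟪e k, u⟫_ℝ := by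
  have hs : 0 < 1 + lam k := by linarith [hlam k]
  rw [coefH, he, real_inner_smul_left, ← mul_assoc, ← mul_inv, Real.mul_self_sqrt hs.le,
    real_inner_comm, div_eq_inv_mul]

theorem hasSum_mul_coefH_mul_coefH [CompleteSpace X] (hlam : ∀ k, -1 < lam k)
    (hON : ∀ j k, ⟪ζ j, ζ k⟫_ℝ = if j = k then 1 + lam k else 0)
    (hdense : (Submodule.span ℝ (range ζ)).topologicalClosure = ⊤) (u v : X) :
    HasSum (fun k => (1 + lam k) * (coefH lam ζ u k * coefH lam ζ v k)) ⟪u, v⟫_ℝ := by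
  obtain ⟨b, hb⟩ := exists_hilbertBasis_eq_inv_sqrt_smul hlam hON hdense
  refine (b.hasSum_inner_mul_inner u v).congr_fun fun k => ?_
  have hs : 0 < 1 + lam k := by linarith [hlam k]
  rw [coefH_eq hlam hb, coefH_eq hlam hb, mul_mul_mul_comm, ← mul_inv, Real.mul_self_sqrt hs.le,
    mul_inv_cancel_left₀ hs.ne', real_inner_comm]

theorem exists_clm_apply_eq_coefH [CompleteSpace X] (hmono : Monotone lam) (hlam : ∀ k, -1 < lam k)
    (hON : ∀ j k, ⟪ζ j, ζ k⟫_ℝ = if j = k then 1 + lam k else 0)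
    (hdense : (Submodule.span ℝ (range ζ)).topologicalClosure = ⊤) :
    ∃ j : X →L[ℝ] ℓ²(ℕ, ℝ), ∀ u k, j u k = coefH lam ζ u k := by
  obtain ⟨b, hb⟩ := exists_hilbertBasis_eq_inv_sqrt_smul hlam hON hdense
  have hpos : 0 < √(1 + lam 0) := Real.sqrt_pos.2 (by linarith [hlam 0])
  have hbound (k : ℕ) :
      ‖(√(1 + lam k))⁻¹ • ContinuousLinearMap.id ℝ ℝ‖ ≤ (√(1 + lam 0))⁻¹ := by
    rw [norm_smul, ContinuousLinearMap.norm_id, mul_one, norm_inv,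
      Real.norm_of_nonneg (Real.sqrt_nonneg _)]
    exact inv_anti₀ hpos (Real.sqrt_le_sqrt (by linarith [hmono k.zero_le]))
  refine ⟨lp.mapCLM 2 _ (inv_nonneg.2 hpos.le) hbound ∘L
    (b.repr.toContinuousLinearEquiv : X →L[ℝ] _), fun u k => ?_⟩
  rw [coefH_eq hlam hb, ← b.repr_apply_apply]
  rfl

theorem hasSum_coefH_mul_coefH {j : X →L[ℝ] ℓ²(ℕ, ℝ)} (hj : ∀ u k, j u k = coefH lam ζ u k)
    (u v : X) : HasSum (fun k => coefH lam ζ u k * coefH lam ζ v k) ⟪j u, j v⟫_ℝ :=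
  (lp.hasSum_inner (𝕜 := ℝ) (j u) (j v)).congr_fun fun k => by
    rw [hj, hj, Real.inner_apply, mul_comm]

theorem normHsq_eq {j : X →L[ℝ] ℓ²(ℕ, ℝ)} (hj : ∀ u k, j u k = coefH lam ζ u k) (u : X) :
    normHsq lam ζ u = ‖j u‖ ^ 2 := by
  simpa only [normHsq, ← sq, real_inner_self_eq_norm_sq] using
    (hasSum_coefH_mul_coefH hj u u).tsum_eq

theorem qForm_eq [CompleteSpace X] (hlam : ∀ k, -1 < lam k)
    (hON : ∀ j k, ⟪ζ j, ζ k⟫_ℝ = if j = k then 1 + lam k else 0)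
    (hdense : (Submodule.span ℝ (range ζ)).topologicalClosure = ⊤)
    {j : X →L[ℝ] ℓ²(ℕ, ℝ)} (hj : ∀ u k, j u k = coefH lam ζ u k) (lambda : ℝ) (u v : X) :
    qForm lam ζ lambda u v = ⟪u, v⟫_ℝ - (1 + lambda) * ⟪j u, j v⟫_ℝ := by
  refine (((hasSum_mul_coefH_mul_coefH hlam hON hdense u v).sub
    ((hasSum_coefH_mul_coefH hj u v).mul_left (1 + lambda))).congr_fun fun k => ?_).tsum_eq
  ring

theorem mem_orthogonal_Esub_iff {n : ℕ} {w : X} :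
    w ∈ (Esub ζ n)ᗮ ↔ ∀ k ≤ n, ⟪ζ k, w⟫_ℝ = 0 := by
  refine ⟨fun hw k hk => Submodule.inner_right_of_mem_orthogonal
    (Submodule.subset_span (mem_image_of_mem ζ hk)) hw, fun hw => ?_⟩
  have hle : Esub ζ n ≤ (Submodule.span ℝ {w})ᗮ :=
    Submodule.span_le.2 <| image_subset_iff.2 fun k hk =>
      Submodule.mem_orthogonal_singleton_iff_inner_left.2 (hw k hk)
  exact fun v hv => Submodule.mem_orthogonal_singleton_iff_inner_left.1 (hle hv)

theorem eigenvector_mem_orthogonal_Esub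
    (hON : ∀ j k, ⟪ζ j, ζ k⟫_ℝ = if j = k then 1 + lam k else 0) {n k : ℕ} (hk : n < k) :
    ζ k ∈ (Esub ζ n)ᗮ :=
  mem_orthogonal_Esub_iff.2 fun i hi => by rw [hON, if_neg (hi.trans_lt hk).ne]

theorem coefH_eq_zero_of_mem_Esub
    (hON : ∀ j k, ⟪ζ j, ζ k⟫_ℝ = if j = k then 1 + lam k else 0) {n k : ℕ} (hk : n < k) {v : X}
    (hv : v ∈ Esub ζ n) : coefH lam ζ v k = 0 := by
  rw [coefH, Submodule.inner_right_of_mem_orthogonal hv (eigenvector_mem_orthogonal_Esub hON hk),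
    zero_div]

theorem coefH_eq_zero_of_mem_orthogonal_Esub {n k : ℕ} (hk : k ≤ n) {w : X}
    (hw : w ∈ (Esub ζ n)ᗮ) : coefH lam ζ w k = 0 := by
  rw [coefH, real_inner_comm, mem_orthogonal_Esub_iff.1 hw k hk, zero_div]

theorem inner_eigenvector (hlam : ∀ k, -1 < lam k)
    (hON : ∀ j k, ⟪ζ j, ζ k⟫_ℝ = if j = k then 1 + lam k else 0)
    {j : X →L[ℝ] ℓ²(ℕ, ℝ)} (hj : ∀ u k, j u k = coefH lam ζ u k) (k : ℕ) (x : X) :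
    ⟪ζ k, x⟫_ℝ = (1 + lam k) * ⟪j (ζ k), j x⟫_ℝ := by
  have hpos : 0 < 1 + lam k := by linarith [hlam k]
  have hself : coefH lam ζ (ζ k) k = 1 := by rw [coefH, hON, if_pos rfl, div_self hpos.ne']
  have hinner : ⟪j (ζ k), j x⟫_ℝ = coefH lam ζ x k := by
    refine (hasSum_coefH_mul_coefH hj (ζ k) x).unique ?_
    convert hasSum_single k fun i hi => ?_ using 1
    · rw [hself, one_mul]
    · rw [coefH, hON, if_neg hi.symm, zero_div, zero_mul]
  rw [hinner, coefH, mul_div_cancel₀ _ hpos.ne', real_inner_comm]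

theorem isSpectralGap_Esub [CompleteSpace X] (hmono : Monotone lam) (hlam : ∀ k, -1 < lam k)
    (hON : ∀ j k, ⟪ζ j, ζ k⟫_ℝ = if j = k then 1 + lam k else 0)
    (hdense : (Submodule.span ℝ (range ζ)).topologicalClosure = ⊤)
    {j : X →L[ℝ] ℓ²(ℕ, ℝ)} (hj : ∀ u k, j u k = coefH lam ζ u k) {n : ℕ}
    (hgap : lam n < lam (n + 1)) :
    IsSpectralGap j (Esub ζ n) (1 + lam n) (1 + lam (n + 1)) where
  nonneg := by linarith [hlam n]
  lt := by linarith
  norm_sq_le v hv := by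
    rw [← real_inner_self_eq_norm_sq (j v), ← real_inner_self_eq_norm_sq v]
    refine hasSum_le (fun k => ?_) (hasSum_mul_coefH_mul_coefH hlam hON hdense v v)
      ((hasSum_coefH_mul_coefH hj v v).mul_left _)
    rcases le_or_gt k n with hk | hk
    · exact mul_le_mul_of_nonneg_right (by linarith [hmono hk]) (mul_self_nonneg _)
    · simp [coefH_eq_zero_of_mem_Esub hON hk hv]
  le_norm_sq w hw := by
    rw [← real_inner_self_eq_norm_sq (j w), ← real_inner_self_eq_norm_sq w]
    refine hasSum_le (fun k => ?_) ((hasSum_coefH_mul_coefH hj w w).mul_left _)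
      (hasSum_mul_coefH_mul_coefH hlam hON hdense w w)
    rcases le_or_gt k n with hk | hk
    · simp [coefH_eq_zero_of_mem_orthogonal_Esub hk hw]
    · exact mul_le_mul_of_nonneg_right (by linarith [hmono (Nat.succ_le_of_lt hk)])
        (mul_self_nonneg _)
  exists_eigenvector := by
    refine ⟨ζ (n + 1), eigenvector_mem_orthogonal_Esub hON n.lt_succ_self, fun h0 => ?_,
      inner_eigenvector hlam hON hj (n + 1)⟩
    have hself := hON (n + 1) (n + 1)
    rw [h0, inner_zero_left, if_pos rfl] at hself
    linarith [hlam (n + 1)]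

theorem injective_prodMk_of_mem_Ioo {ι Y : Type*} (hmono : Monotone lam) {ns : ι → ℕ}
    (hns : Function.Injective ns) {u : ι → Y} {Λ : ι → ℝ}
    (hΛ : ∀ i, Λ i ∈ Ioo (lam (ns i)) (lam (ns i + 1))) :
    Function.Injective fun i => (u i, Λ i) := by
  have hlt {i k : ι} (h : ns i < ns k) : Λ i < Λ k :=
    (hΛ i).2.trans ((hmono (Nat.succ_le_of_lt h)).trans_lt (hΛ k).1)
  intro i k hik
  have hΛik : Λ i = Λ k := congrArg Prod.snd hik
  by_contra hne
  rcases lt_or_gt_of_ne (hns.ne hne) with h | h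
  · exact (hlt h).ne hΛik
  · exact (hlt h).ne' hΛik

end Eigenbasis

end NormalizedSolutions

open NormalizedSolutions in
theorem multiple_normalized_solutions_general {X ι : Type*} [NormedAddCommGroup X]
    [InnerProductSpace ℝ X] [CompleteSpace X] [Finite ι] {lam : ℕ → ℝ} {ζ : ℕ → X}
    (hmono : Monotone lam) (hlam : ∀ k, -1 < lam k)
    (hON : ∀ j k, ⟪ζ j, ζ k⟫_ℝ = if j = k then 1 + lam k else 0)
    (hdense : (Submodule.span ℝ (range ζ)).topologicalClosure = ⊤)
    {I : X → ℝ} {I' : X → X →L[ℝ] ℝ} (hI : IsSuperquadratic I I')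
    {ns : ι → ℕ} (hns : Function.Injective ns) (hgaps : ∀ i, lam (ns i) < lam (ns i + 1)) :
    ∃ μk : ℝ, 0 < μk ∧ ∀ μ : ℝ, 0 < μ → μ < μk →
      ∃ (Λ : ι → ℝ) (u : ι → X),
        (∀ i, Λ i ∈ Ioo (lam (ns i)) (lam (ns i + 1))) ∧
        (∀ i, ∀ v : X, qForm lam ζ (Λ i) (u i) v = I' (u i) v) ∧
        (∀ i, √(normHsq lam ζ (u i)) = μ) ∧
        Function.Injective (fun i => (u i, Λ i)) := by
  obtain ⟨j, hj⟩ := exists_clm_apply_eq_coefH hmono hlam hON hdense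
  have hsol : ∀ᶠ μ in 𝓝[>] (0 : ℝ), ∀ i, ∃ Λ ∈ Ioo (1 + lam (ns i)) (1 + lam (ns i + 1)), ∃ u,
      (∀ x, ⟪u, x⟫_ℝ - Λ * ⟪j u, j x⟫_ℝ = I' u x) ∧ ‖j u‖ = μ :=
    eventually_all.2 fun i => by
      have : FiniteDimensional ℝ (Esub ζ (ns i)) :=
        FiniteDimensional.span_of_finite ℝ ((finite_le_nat _).image ζ)
      exact (isSpectralGap_Esub hmono hlam hON hdense hj
        (hgaps i)).eventually_exists_normalized_solution hI
  obtain ⟨μk, hμk, hsub⟩ := mem_nhdsGT_iff_exists_Ioo_subset.1 hsol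
  refine ⟨μk, hμk, fun μ hμ hlt => ?_⟩
  choose Λ hΛ u hu hmass using hsub ⟨hμ, hlt⟩
  have hgap (i : ι) : Λ i - 1 ∈ Ioo (lam (ns i)) (lam (ns i + 1)) :=
    ⟨by linarith [(hΛ i).1], by linarith [(hΛ i).2]⟩
  refine ⟨fun i => Λ i - 1, u, hgap, fun i v => ?_, fun i => ?_,
    injective_prodMk_of_mem_Ioo hmono hns hgap⟩
  · rw [qForm_eq hlam hON hdense hj, add_sub_cancel, hu]
  · rw [normHsq_eq hj, Real.sqrt_sq (norm_nonneg _), hmass]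

/-- Multiplicity of normalized solutions: given `k` pairwise disjoint
spectral gaps, there is `μ_k > 0` such that every mass `μ ∈ (0, μ_k)` is attained by `k`
distinct normalized solutions, one in each gap. -/
theorem multiple_normalized_solutions {E : Type*} [NormedAddCommGroup E]
    [InnerProductSpace ℝ E] [CompleteSpace E]
    (lam : ℕ → ℝ) (ζ : ℕ → E)
    (hlam_mono : Monotone lam) (hlam_nonneg : ∀ k, 0 ≤ lam k)
    (hlam_top : Tendsto lam atTop atTop)
    (hON : ∀ j k, ⟪ζ j, ζ k⟫_ℝ = if j = k then 1 + lam k else 0)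
    (hdense : (Submodule.span ℝ (Set.range ζ)).topologicalClosure = ⊤)
    (I : E → ℝ) (I' : E → E →L[ℝ] ℝ)
    (hIderiv : ∀ u, HasFDerivAt I (I' u) u) (hIderiv_cont : Continuous I')
    (hI1 : ∀ (u : ℕ → E) (a : E),
      (∀ φ : E →L[ℝ] ℝ, Tendsto (fun j => φ (u j)) atTop (𝓝 (φ a))) →
      Tendsto (fun j => I (u j)) atTop (𝓝 (I a)))
    (hI2 : I 0 = 0 ∧ ∀ u : E, u ≠ 0 → 0 < I u)
    (hI3mono : ∀ u : E, u ≠ 0 → MonotoneOn (fun t : ℝ => I (t • u) / t ^ 2) (Ioi 0))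
    (hI3zero : ∀ u : E, u ≠ 0 → Tendsto (fun t : ℝ => I (t • u) / t ^ 2) (𝓝[>] 0) (𝓝 0))
    (hI3top : ∀ u : E, u ≠ 0 → Tendsto (fun t : ℝ => I (t • u) / t ^ 2) atTop atTop)
    (hI4 : ∀ u : E, u ≠ 0 → ∀ v : E, ∀ s : ℝ, -1 ≤ s →
      I u - I ((1 + s) • u + v) + I' u ((s * (s / 2 + 1)) • u + (1 + s) • v) ≤ 0)
    (hI4strict : ∀ u : E, u ≠ 0 → ∀ s : ℝ, -1 ≤ s → s ≠ 0 →
      I u - I ((1 + s) • u) + I' u ((s * (s / 2 + 1)) • u) < 0)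
    (n : ℕ)
    (k : ℕ) (hk : 1 ≤ k) (ns : Fin k → ℕ) (hns : StrictMono ns)
    (hgaps : ∀ i, lam (ns i) < lam (ns i + 1)) :
    ∃ μk : ℝ, 0 < μk ∧ ∀ μ : ℝ, 0 < μ → μ < μk →
      ∃ (Λ : Fin k → ℝ) (u : Fin k → E),
        (∀ i, Λ i ∈ Ioo (lam (ns i)) (lam (ns i + 1))) ∧
        (∀ i, ∀ v : E, qForm lam ζ (Λ i) (u i) v = I' (u i) v) ∧
        (∀ i, Real.sqrt (normHsq lam ζ (u i)) = μ) ∧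
        Function.Injective (fun i => (u i, Λ i)) := by
  exact multiple_normalized_solutions_general hlam_mono (fun k => by linarith [hlam_nonneg k]) hON
    hdense ⟨hIderiv, hIderiv_cont, hI1, hI2.1, hI2.2, hI3mono, hI3zero, hI3top, hI4, hI4strict⟩
    hns.injective hgaps
end

section
/- Under assumptions (I1)–(I4), let K ⊂ (λ_n, λ_{n+1}) be a compact set and let u ∈ E∖E_n. Then there exists R > 0 such that J_λ(w) ≤ 0 for every λ ∈ K and every w ∈ F_n(u)⁺ with ‖w‖_E ≥ R. -/
open Filter Topology Set
open scoped InnerProductSpace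

/- Abstract setting: `E = D(A^{1/2})` is a real Hilbert space in which the rescaled
eigenfunctions `ζ_k / √(1+λ_k)` form a Hilbert basis (encoded by `hON` and `hdense` below);
the `H`-inner product of `u, v ∈ E` is recovered as `∑ₖ ⟨u,ζ_k⟩_H ⟨v,ζ_k⟩_H`, where
`⟨u,ζ_k⟩_H = ⟨u,ζ_k⟩_E / (1+λ_k)`. -/

variable {E : Type*} [NormedAddCommGroup E] [InnerProductSpace ℝ E] [CompleteSpace E]

/-! As `λ_k - λ ≤ C (1 + λ_k)` for every `k` once `C ≥ max 1 (-λ)`, Bessel's inequality gives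
`q_λ(w) ≤ C ‖w‖²`, uniformly for `λ` in a set bounded below. The functions `t ↦ I(te)/t²` increase
to `+∞` for each `e` in the unit sphere of a finite-dimensional subspace `F`, so by compactness of
that sphere they exceed `C/2` simultaneously for all `t ≥ R`. Hence `I(w) ≥ C ‖w‖²/2 ≥ q_λ(w)/2`
for `w ∈ F` with `‖w‖ ≥ R`. -/

theorem exists_forall_lt_of_monotone {X ι α : Type*} [TopologicalSpace X] [CompactSpace X]
    [Preorder ι] [IsDirectedOrder ι] [Nonempty ι] [Preorder α] {g : ι → X → α} {c : α}
    (hlsc : ∀ i, LowerSemicontinuous (g i)) (hmono : Monotone g) (hc : ∀ x, ∃ i, c < g i x) :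
    ∃ i, ∀ x, c < g i x := by
  have hsub : Monotone fun i => {x | c < g i x} :=
    fun i j hij x hx => lt_of_lt_of_le hx (hmono hij x)
  obtain ⟨i, hi⟩ := isCompact_univ.elim_directed_cover (fun i => {x | c < g i x})
    (fun i => (hlsc i).isOpen_preimage c) (fun x _ => mem_iUnion.2 (hc x)) hsub.directed_le
  exact ⟨i, fun x => hi (mem_univ x)⟩

theorem tendsto_div_norm_pow_cobounded_atTop {V : Type*} [NormedAddCommGroup V] [NormedSpace ℝ V]
    [ProperSpace V] {f : V → ℝ} {p : ℕ} (hlsc : LowerSemicontinuous f)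
    (hmono : ∀ x ≠ 0, MonotoneOn (fun t : ℝ => f (t • x) / t ^ p) (Ioi 0))
    (htop : ∀ x ≠ 0, Tendsto (fun t : ℝ => f (t • x) / t ^ p) atTop atTop) :
    Tendsto (fun x => f x / ‖x‖ ^ p) (Bornology.cobounded V) atTop := by
  refine tendsto_atTop.2 fun C => ?_
  let g (t : Ioi (0 : ℝ)) (e : Metric.sphere (0 : V) 1) : ℝ := f (t.1 • e.1) / t.1 ^ p
  have sphere_ne_zero (e : Metric.sphere (0 : V) 1) : e.1 ≠ 0 := ne_zero_of_mem_unit_sphere e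
  have g_lsc (t) : LowerSemicontinuous (g t) := by
    have hdiv : Monotone fun y : ℝ => y / t.1 ^ p :=
      fun _ _ h => div_le_div_of_nonneg_right h (pow_nonneg t.2.le p)
    exact (continuous_id.div_const (t.1 ^ p)).comp_lowerSemicontinuous
      (hlsc.comp (continuous_subtype_val.const_smul t.1)) hdiv
  have g_mono : Monotone g := fun s t hst e => hmono e (sphere_ne_zero e) s.2 t.2 hst
  have g_large (e) : ∃ t, C < g t e := by
    obtain ⟨t, htC, ht⟩ := (((htop e (sphere_ne_zero e)).eventually_gt_atTop C).and
      (eventually_gt_atTop 0)).exists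
    exact ⟨⟨t, ht⟩, htC⟩
  obtain ⟨T, hT⟩ := exists_forall_lt_of_monotone g_lsc g_mono g_large
  filter_upwards [tendsto_norm_cobounded_atTop.eventually_ge_atTop T.1] with x hx
  have hx_pos : 0 < ‖x‖ := lt_of_lt_of_le T.2 hx
  let e : Metric.sphere (0 : V) 1 :=
    ⟨NormedSpace.normalize x, by simp [NormedSpace.norm_normalize (norm_pos_iff.1 hx_pos)]⟩
  calc
    C ≤ g T e := (hT e).le
    _ ≤ g ⟨‖x‖, hx_pos⟩ e := g_mono hx e
    _ = f x / ‖x‖ ^ p := by simp only [g, e, NormedSpace.norm_smul_normalize]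

theorem sum_norm_inner_sq_div_norm_sq_le {𝕜 V ι : Type*} [RCLike 𝕜] [NormedAddCommGroup V]
    [InnerProductSpace 𝕜 V] {v : ι → V} (hv : ∀ i, v i ≠ 0)
    (horth : Pairwise fun i j => ⟪v i, v j⟫_𝕜 = 0) (w : V) (s : Finset ι) :
    ∑ i ∈ s, ‖⟪v i, w⟫_𝕜‖ ^ 2 / ‖v i‖ ^ 2 ≤ ‖w‖ ^ 2 := by
  have hnormalized : Orthonormal 𝕜 fun i => ((‖v i‖⁻¹ : ℝ) : 𝕜) • v i :=
    ⟨fun i => by simp [norm_smul, hv i],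
      fun i j hij => by simp only [inner_smul_left, inner_smul_right, horth hij, mul_zero]⟩
  refine le_trans (Finset.sum_le_sum fun i _ => le_of_eq ?_) (hnormalized.sum_inner_products_le w)
  rw [inner_smul_left, norm_mul, RCLike.norm_conj, RCLike.norm_ofReal, abs_inv, abs_norm, mul_pow,
    inv_pow, div_eq_inv_mul]

section

variable {V : Type*} [NormedAddCommGroup V] [InnerProductSpace ℝ V] {lam : ℕ → ℝ} {ζ : ℕ → V}

theorem sum_one_add_mul_coefH_sq_le (hlam : ∀ k, -1 < lam k)
    (hON : ∀ j k, ⟪ζ j, ζ k⟫_ℝ = if j = k then 1 + lam k else 0) (w : V) (s : Finset ℕ) :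
    ∑ k ∈ s, (1 + lam k) * coefH lam ζ w k ^ 2 ≤ ‖w‖ ^ 2 := by
  have hpos (k) : 0 < 1 + lam k := by linarith [hlam k]
  have hnorm (k) : ‖ζ k‖ ^ 2 = 1 + lam k := by
    rw [← real_inner_self_eq_norm_sq, hON, if_pos rfl]
  have hne (k) : ζ k ≠ 0 := fun h => (hpos k).ne' (by rw [← hnorm k, h, norm_zero, sq, zero_mul])
  have horth : Pairwise fun j k => ⟪ζ j, ζ k⟫_ℝ = 0 := fun j k hjk =>
    (hON j k).trans (if_neg hjk)
  refine le_trans (Finset.sum_le_sum fun k _ => le_of_eq ?_)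
    (sum_norm_inner_sq_div_norm_sq_le hne horth w s)
  have := (hpos k).ne'
  rw [coefH, hnorm, Real.norm_eq_abs, sq_abs, real_inner_comm]
  field_simp

theorem qForm_self_le (hlam : ∀ k, 0 ≤ lam k)
    (hON : ∀ j k, ⟪ζ j, ζ k⟫_ℝ = if j = k then 1 + lam k else 0) {C lambda : ℝ} (hC : 1 ≤ C)
    (hlambda : -C ≤ lambda) (w : V) :
    qForm lam ζ lambda w w ≤ C * ‖w‖ ^ 2 := by
  have hweight (k) : lam k - lambda ≤ C * (1 + lam k) := by nlinarith [hlam k]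
  refine tsum_le_of_sum_le' (by positivity) fun s => ?_
  calc
    ∑ k ∈ s, (lam k - lambda) * (coefH lam ζ w k * coefH lam ζ w k)
        ≤ ∑ k ∈ s, C * ((1 + lam k) * coefH lam ζ w k ^ 2) := by
      refine Finset.sum_le_sum fun k _ => ?_
      rw [← sq, ← mul_assoc]
      exact mul_le_mul_of_nonneg_right (hweight k) (sq_nonneg _)
    _ = C * ∑ k ∈ s, (1 + lam k) * coefH lam ζ w k ^ 2 := (Finset.mul_sum ..).symm
    _ ≤ C * ‖w‖ ^ 2 := by
      gcongr
      exact sum_one_add_mul_coefH_sq_le (fun k => neg_one_lt_zero.trans_le (hlam k)) hON w s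

theorem finiteDimensional_Fsub (ζ : ℕ → V) (n : ℕ) (u : V) : FiniteDimensional ℝ (Fsub ζ n u) := by
  have : FiniteDimensional ℝ (Esub ζ n) :=
    FiniteDimensional.span_of_finite ℝ ((finite_le_nat n).image ζ)
  exact Submodule.finiteDimensional_sup _ _

theorem FsubPlus_subset_Fsub (ζ : ℕ → V) (n : ℕ) (u : V) : FsubPlus ζ n u ⊆ Fsub ζ n u := by
  rintro _ ⟨v, hv, t, -, rfl⟩
  exact Submodule.add_mem_sup hv (Submodule.smul_mem _ t (Submodule.mem_span_singleton_self u))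

end

theorem J_nonpos_outside_ball_general {V : Type*} [NormedAddCommGroup V] [InnerProductSpace ℝ V]
    {lam : ℕ → ℝ} {ζ : ℕ → V} (hlam_nonneg : ∀ k, 0 ≤ lam k)
    (hON : ∀ j k, ⟪ζ j, ζ k⟫_ℝ = if j = k then 1 + lam k else 0)
    {F : Submodule ℝ V} [FiniteDimensional ℝ F] {I : V → ℝ} (hI : LowerSemicontinuousOn I F)
    (hImono : ∀ u ∈ F, u ≠ 0 → MonotoneOn (fun t : ℝ => I (t • u) / t ^ 2) (Ioi 0))
    (hItop : ∀ u ∈ F, u ≠ 0 → Tendsto (fun t : ℝ => I (t • u) / t ^ 2) atTop atTop)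
    {K : Set ℝ} (hK : BddBelow K) :
    ∃ R : ℝ, 0 < R ∧ ∀ lambda ∈ K, ∀ w ∈ F, R ≤ ‖w‖ → Jfun lam ζ I lambda w ≤ 0 := by
  obtain ⟨m, hm⟩ := hK
  let C : ℝ := max 1 (-m)
  have hgrowth : Tendsto (fun w : F => I w / ‖w‖ ^ 2) (Bornology.cobounded F) atTop :=
    tendsto_div_norm_pow_cobounded_atTop (lowerSemicontinuous_restrict_iff.2 hI)
      (fun w hw => hImono w w.2 (Subtype.coe_ne_coe.2 hw))
      (fun w hw => hItop w w.2 (Subtype.coe_ne_coe.2 hw))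
  obtain ⟨R, -, hR⟩ :=
    hasBasis_cobounded_norm.eventually_iff.1 (hgrowth.eventually_ge_atTop (C / 2))
  refine ⟨max R 1, by positivity, fun lambda hlambda w hwF hw => ?_⟩
  have hw_pos : 0 < ‖w‖ := one_pos.trans_le ((le_max_right R 1).trans hw)
  have hIw : C / 2 * ‖w‖ ^ 2 ≤ I w :=
    (le_div_iff₀ (by positivity)).1 (hR (x := ⟨w, hwF⟩) ((le_max_left R 1).trans hw))
  have hqw : qForm lam ζ lambda w w ≤ C * ‖w‖ ^ 2 :=
    qForm_self_le hlam_nonneg hON (le_max_left 1 (-m))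
      (by linarith [hm hlambda, le_max_right 1 (-m)]) w
  rw [Jfun]
  linarith

/-- Uniform boundedness of the positivity region of `J_λ` on `F_n(u)⁺`
for `λ` in a compact subset of the spectral gap. -/
theorem J_nonpos_outside_ball {E : Type*} [NormedAddCommGroup E]
    [InnerProductSpace ℝ E] [CompleteSpace E]
    (lam : ℕ → ℝ) (ζ : ℕ → E)
    (hlam_mono : Monotone lam) (hlam_nonneg : ∀ k, 0 ≤ lam k)
    (hlam_top : Tendsto lam atTop atTop)
    (hON : ∀ j k, ⟪ζ j, ζ k⟫_ℝ = if j = k then 1 + lam k else 0)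
    (hdense : (Submodule.span ℝ (Set.range ζ)).topologicalClosure = ⊤)
    (I : E → ℝ) (I' : E → E →L[ℝ] ℝ)
    (hIderiv : ∀ u, HasFDerivAt I (I' u) u) (hIderiv_cont : Continuous I')
    (hI1 : ∀ (u : ℕ → E) (a : E),
      (∀ φ : E →L[ℝ] ℝ, Tendsto (fun j => φ (u j)) atTop (𝓝 (φ a))) →
      Tendsto (fun j => I (u j)) atTop (𝓝 (I a)))
    (hI2 : I 0 = 0 ∧ ∀ u : E, u ≠ 0 → 0 < I u)
    (hI3mono : ∀ u : E, u ≠ 0 → MonotoneOn (fun t : ℝ => I (t • u) / t ^ 2) (Ioi 0))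
    (hI3zero : ∀ u : E, u ≠ 0 → Tendsto (fun t : ℝ => I (t • u) / t ^ 2) (𝓝[>] 0) (𝓝 0))
    (hI3top : ∀ u : E, u ≠ 0 → Tendsto (fun t : ℝ => I (t • u) / t ^ 2) atTop atTop)
    (hI4 : ∀ u : E, u ≠ 0 → ∀ v : E, ∀ s : ℝ, -1 ≤ s →
      I u - I ((1 + s) • u + v) + I' u ((s * (s / 2 + 1)) • u + (1 + s) • v) ≤ 0)
    (hI4strict : ∀ u : E, u ≠ 0 → ∀ s : ℝ, -1 ≤ s → s ≠ 0 →
      I u - I ((1 + s) • u) + I' u ((s * (s / 2 + 1)) • u) < 0)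
    (n : ℕ)
    (hgap : lam n < lam (n + 1))
    (K : Set ℝ) (hKcompact : IsCompact K) (hKsub : K ⊆ Ioo (lam n) (lam (n + 1)))
    (u : E) (hu : u ∉ Esub ζ n) :
    ∃ R : ℝ, 0 < R ∧ ∀ lambda ∈ K, ∀ w ∈ FsubPlus ζ n u,
      R ≤ ‖w‖ → Jfun lam ζ I lambda w ≤ 0 := by
  have := finiteDimensional_Fsub ζ n u
  have hI : Continuous I := continuous_iff_continuousAt.2 fun x => (hIderiv x).continuousAt
  obtain ⟨R, hR, hJ⟩ := J_nonpos_outside_ball_general hlam_nonneg hON (F := Fsub ζ n u)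
    (hI.lowerSemicontinuous.lowerSemicontinuousOn _) (fun w _ => hI3mono w)
    (fun w _ => hI3top w) (bddBelow_Ioo.mono hKsub)
  exact ⟨R, hR, fun lambda hlambda w hw => hJ lambda hlambda w (FsubPlus_subset_Fsub ζ n u hw)⟩
end

section
/- Under assumptions (I1)–(I4), let λ ∈ (λ_n, λ_{n+1}) and let u ∈ NP_λ. Then J_λ(u) > J_λ(w) for every w ∈ F_n(u)⁺ with w ≠ u; that is, u is the unique, strict global maximizer of the restriction of J_λ to F_n(u)⁺. -/
open Filter Topology Set
open scoped InnerProductSpace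

/- Abstract setting: `E = D(A^{1/2})` is a real Hilbert space in which the rescaled
eigenfunctions `ζ_k / √(1+λ_k)` form a Hilbert basis (encoded by `hON` and `hdense` below);
the `H`-inner product of `u, v ∈ E` is recovered as `∑ₖ ⟨u,ζ_k⟩_H ⟨v,ζ_k⟩_H`, where
`⟨u,ζ_k⟩_H = ⟨u,ζ_k⟩_E / (1+λ_k)`. -/

variable {E : Type*} [NormedAddCommGroup E] [InnerProductSpace ℝ E] [CompleteSpace E]

/-! For `w = (1 + s)u + v` with `v ∈ E_n` and `s ≥ -1`, put `z = s(s/2 + 1)u + (1 + s)v ∈ F_n(u)`.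
Expanding the quadratic part gives
`J_λ(w) = J_λ(u) + ½ q_λ(v,v) + J_λ'(u)[z] + (I(u) - I(w) + I'(u)[z])`.
The third term vanishes on the Nehari–Pankov set and (I4) bounds the last one. Strictness comes
from `q_λ(v,v) < 0` when `v ≠ 0`, since `λ` lies above the first eigenvalues, and from the strict
case of (I4) when `v = 0`. -/

section Orthogonal

variable {ι E : Type*} [NormedAddCommGroup E] [InnerProductSpace ℝ E]

theorem orthonormal_inv_sqrt_smul [DecidableEq ι] {a : ι → ℝ} {ζ : ι → E}
    (ha : ∀ k, 0 < a k) (hζ : ∀ j k, ⟪ζ j, ζ k⟫_ℝ = if j = k then a k else 0) :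
    Orthonormal ℝ fun k => (√(a k))⁻¹ • ζ k := by
  rw [orthonormal_iff_ite]
  intro j k
  rw [real_inner_smul_left, real_inner_smul_right, hζ]
  split_ifs with hjk
  · subst hjk
    rw [← mul_assoc, ← mul_inv, Real.mul_self_sqrt (ha j).le, inv_mul_cancel₀ (ha j).ne']
  · simp

theorem summable_inner_mul_inner_of_orthonormal {e : ι → E} (he : Orthonormal ℝ e) (u v : E) :
    Summable fun i => ⟪e i, u⟫_ℝ * ⟪e i, v⟫_ℝ := by
  have hbound := (he.inner_products_summable u).add (he.inner_products_summable v)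
  refine hbound.of_norm_bounded fun i => ?_
  rw [norm_mul]
  nlinarith [sq_nonneg (‖⟪e i, u⟫_ℝ‖ - ‖⟪e i, v⟫_ℝ‖), sq_nonneg ‖⟪e i, u⟫_ℝ‖,
    sq_nonneg ‖⟪e i, v⟫_ℝ‖]

theorem eq_zero_of_mem_span_of_inner_eq_zero {s : Set E} {v : E} (hv : v ∈ Submodule.span ℝ s)
    (h : ∀ x ∈ s, ⟪v, x⟫_ℝ = 0) : v = 0 := by
  have hle : Submodule.span ℝ s ≤ (ℝ ∙ v)ᗮ :=
    Submodule.span_le.2 fun x hx => Submodule.mem_orthogonal_singleton_iff_inner_right.2 (h x hx)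
  exact inner_self_eq_zero.1 (Submodule.mem_orthogonal_singleton_iff_inner_right.1 (hle hv))

end Orthogonal

section QuadraticForm

variable {E : Type*} [NormedAddCommGroup E] [InnerProductSpace ℝ E] {lam : ℕ → ℝ} {ζ : ℕ → E}

theorem coefH_add (u v : E) (k : ℕ) :
    coefH lam ζ (u + v) k = coefH lam ζ u k + coefH lam ζ v k := by
  rw [coefH, inner_add_left, add_div, coefH, coefH]

theorem coefH_smul (a : ℝ) (u : E) (k : ℕ) : coefH lam ζ (a • u) k = a * coefH lam ζ u k := by
  rw [coefH, real_inner_smul_left, mul_div_assoc, coefH]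

theorem coefH_eq_zero_of_mem_Esub {n k : ℕ} {v : E} (hζ : ∀ j ≤ n, ⟪ζ j, ζ k⟫_ℝ = 0)
    (hv : v ∈ Esub ζ n) : coefH lam ζ v k = 0 := by
  have hle : Esub ζ n ≤ (ℝ ∙ ζ k)ᗮ := by
    rw [Esub, Submodule.span_le]
    rintro _ ⟨j, hj, rfl⟩
    exact Submodule.mem_orthogonal_singleton_iff_inner_left.2 (hζ j hj)
  rw [coefH, Submodule.mem_orthogonal_singleton_iff_inner_left.1 (hle hv), zero_div]

theorem exists_coefH_ne_zero_of_mem_Esub {n : ℕ} {v : E} (hlam : ∀ k ≤ n, 1 + lam k ≠ 0)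
    (hv : v ∈ Esub ζ n) (hv0 : v ≠ 0) : ∃ k ≤ n, coefH lam ζ v k ≠ 0 := by
  by_contra! hcoef
  refine hv0 (eq_zero_of_mem_span_of_inner_eq_zero hv ?_)
  rintro _ ⟨k, hk, rfl⟩
  exact (div_eq_zero_iff.1 (hcoef k hk)).resolve_right (hlam k hk)

theorem summable_one_add_mul_coefH_mul_coefH (hlam : ∀ k, 0 < 1 + lam k)
    (hON : ∀ j k, ⟪ζ j, ζ k⟫_ℝ = if j = k then 1 + lam k else 0) (u v : E) :
    Summable fun k => (1 + lam k) * (coefH lam ζ u k * coefH lam ζ v k) := by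
  refine (summable_inner_mul_inner_of_orthonormal
    (orthonormal_inv_sqrt_smul hlam hON) u v).congr fun k => ?_
  have hsqrt := Real.sq_sqrt (hlam k).le
  have hsqrt_ne := (Real.sqrt_pos.2 (hlam k)).ne'
  have hne := (hlam k).ne'
  rw [real_inner_smul_left, real_inner_smul_left, real_inner_comm, real_inner_comm v, coefH, coefH]
  field_simp
  rw [hsqrt]

theorem summable_qForm (hlam : ∀ k, 0 ≤ lam k)
    (hON : ∀ j k, ⟪ζ j, ζ k⟫_ℝ = if j = k then 1 + lam k else 0) (lambda : ℝ) (u v : E) :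
    Summable fun k => (lam k - lambda) * (coefH lam ζ u k * coefH lam ζ v k) := by
  have hpos : ∀ k, 0 < 1 + lam k := fun k => by linarith [hlam k]
  have hweight : ∀ k, |lam k - lambda| ≤ (1 + |lambda|) * |1 + lam k| := fun k => by
    rw [abs_of_pos (hpos k)]
    have hsub := abs_sub (lam k) lambda
    rw [abs_of_nonneg (hlam k)] at hsub
    nlinarith [mul_nonneg (abs_nonneg lambda) (hlam k)]
  refine ((summable_one_add_mul_coefH_mul_coefH hpos hON u v).abs.mul_left
    (1 + |lambda|)).of_norm_bounded fun k => ?_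
  rw [Real.norm_eq_abs, abs_mul, abs_mul (1 + lam k), ← mul_assoc]
  exact mul_le_mul_of_nonneg_right (hweight k) (abs_nonneg _)

theorem qForm_comm (lambda : ℝ) (u v : E) :
    qForm lam ζ lambda u v = qForm lam ζ lambda v u := by
  simp only [qForm, mul_comm (coefH lam ζ u _)]

theorem qForm_smul_left (lambda a : ℝ) (u v : E) :
    qForm lam ζ lambda (a • u) v = a * qForm lam ζ lambda u v := by
  simp only [qForm, coefH_smul, ← tsum_mul_left]
  exact tsum_congr fun k => by ring

theorem qForm_smul_right (lambda a : ℝ) (u v : E) :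
    qForm lam ζ lambda u (a • v) = a * qForm lam ζ lambda u v := by
  rw [qForm_comm, qForm_smul_left, qForm_comm]

theorem qForm_add_left (hlam : ∀ k, 0 ≤ lam k)
    (hON : ∀ j k, ⟪ζ j, ζ k⟫_ℝ = if j = k then 1 + lam k else 0) (lambda : ℝ) (u v w : E) :
    qForm lam ζ lambda (u + v) w = qForm lam ζ lambda u w + qForm lam ζ lambda v w := by
  simp only [qForm, coefH_add, add_mul, mul_add]
  exact (summable_qForm hlam hON lambda u w).tsum_add (summable_qForm hlam hON lambda v w)

theorem qForm_add_right (hlam : ∀ k, 0 ≤ lam k)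
    (hON : ∀ j k, ⟪ζ j, ζ k⟫_ℝ = if j = k then 1 + lam k else 0) (lambda : ℝ) (u v w : E) :
    qForm lam ζ lambda u (v + w) = qForm lam ζ lambda u v + qForm lam ζ lambda u w := by
  rw [qForm_comm, qForm_add_left hlam hON, qForm_comm lambda v, qForm_comm lambda w]

theorem qForm_self_neg_of_mem_Esub (hlam : ∀ k, 0 ≤ lam k)
    (hON : ∀ j k, ⟪ζ j, ζ k⟫_ℝ = if j = k then 1 + lam k else 0) {n : ℕ} {lambda : ℝ}
    (hlambda : ∀ k ≤ n, lam k < lambda) {v : E} (hv : v ∈ Esub ζ n) (hv0 : v ≠ 0) :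
    qForm lam ζ lambda v v < 0 := by
  have hterm_nonpos : ∀ k, (lam k - lambda) * (coefH lam ζ v k * coefH lam ζ v k) ≤ 0 := by
    intro k
    rcases le_or_gt k n with hk | hk
    · exact mul_nonpos_of_nonpos_of_nonneg (sub_neg.2 (hlambda k hk)).le (mul_self_nonneg _)
    · have hζ : ∀ j ≤ n, ⟪ζ j, ζ k⟫_ℝ = 0 := fun j hj => by rw [hON, if_neg (by lia)]
      simp [coefH_eq_zero_of_mem_Esub hζ hv]
  obtain ⟨k, hk, hcoef⟩ :=
    exists_coefH_ne_zero_of_mem_Esub (fun k _ => by linarith [hlam k]) hv hv0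
  have hterm_neg : (lam k - lambda) * (coefH lam ζ v k * coefH lam ζ v k) < 0 :=
    mul_neg_of_neg_of_pos (sub_neg.2 (hlambda k hk)) (mul_self_pos.2 hcoef)
  simpa only [qForm, tsum_zero] using
    (summable_qForm hlam hON lambda v v).tsum_lt_tsum hterm_nonpos hterm_neg summable_zero

end QuadraticForm

section NehariPankov

variable {E : Type*} [NormedAddCommGroup E] [InnerProductSpace ℝ E] {lam : ℕ → ℝ} {ζ : ℕ → E}

theorem Jfun_one_add_smul_add (hlam : ∀ k, 0 ≤ lam k)
    (hON : ∀ j k, ⟪ζ j, ζ k⟫_ℝ = if j = k then 1 + lam k else 0)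
    (I : E → ℝ) (I' : E → E →L[ℝ] ℝ) (lambda : ℝ) (u v : E) (s : ℝ) :
    Jfun lam ζ I lambda ((1 + s) • u + v) =
      Jfun lam ζ I lambda u + qForm lam ζ lambda v v / 2
        + Jderiv lam ζ I' lambda u ((s * (s / 2 + 1)) • u + (1 + s) • v)
        + (I u - I ((1 + s) • u + v) + I' u ((s * (s / 2 + 1)) • u + (1 + s) • v)) := by
  simp only [Jfun, Jderiv, qForm_add_left hlam hON, qForm_add_right hlam hON, qForm_smul_left,
    qForm_smul_right, qForm_comm lambda v u]
  ring

theorem smul_add_smul_mem_Fsub {n : ℕ} {u v : E} (hv : v ∈ Esub ζ n) (a b : ℝ) :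
    a • u + b • v ∈ Fsub ζ n u :=
  add_mem
    (Submodule.smul_mem _ _ (Submodule.mem_sup_right (Submodule.mem_span_singleton_self u)))
    (Submodule.smul_mem _ _ (Submodule.mem_sup_left hv))

theorem nehari_pankov_unique_max_general (hlam_nonneg : ∀ k, 0 ≤ lam k)
    (hON : ∀ j k, ⟪ζ j, ζ k⟫_ℝ = if j = k then 1 + lam k else 0)
    {I : E → ℝ} {I' : E → E →L[ℝ] ℝ} {u : E} (hIderiv : HasFDerivAt I (I' u) u)
    (hI4 : ∀ v : E, ∀ s : ℝ, -1 ≤ s →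
      I u - I ((1 + s) • u + v) + I' u ((s * (s / 2 + 1)) • u + (1 + s) • v) ≤ 0)
    (hI4strict : ∀ s : ℝ, -1 ≤ s → s ≠ 0 →
      I u - I ((1 + s) • u) + I' u ((s * (s / 2 + 1)) • u) < 0)
    {n : ℕ} {lambda : ℝ} (hlambda : ∀ k ≤ n, lam k < lambda)
    (hu : u ∈ NehariPankov lam ζ I' n lambda) :
    ∀ w ∈ FsubPlus ζ n u, w ≠ u → Jfun lam ζ I lambda w < Jfun lam ζ I lambda u := by
  rintro _ ⟨v, hv, t, ht, rfl⟩ hne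
  obtain ⟨s, rfl⟩ : ∃ s, t = 1 + s := ⟨t - 1, by ring⟩
  have hs : -1 ≤ s := by linarith
  have hcrit := hu.2 _ (smul_add_smul_mem_Fsub hv (s * (s / 2 + 1)) (1 + s))
  rw [add_comm v, Jfun_one_add_smul_add hlam_nonneg hON I I', hcrit]
  rcases eq_or_ne v 0 with rfl | hv0
  · have hs0 : s ≠ 0 := by
      rintro rfl
      simp at hne
    have hI4lt := hI4strict s hs hs0
    have hq0 : qForm lam ζ lambda (0 : E) 0 = 0 := by simp [qForm, coefH]
    simp only [smul_zero, add_zero, hq0]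
    linarith
  · linarith [hI4 v s hs, qForm_self_neg_of_mem_Esub hlam_nonneg hON hlambda hv hv0]

end NehariPankov

/-- Every `u ∈ NP_λ` is the unique strict global maximizer of `J_λ`
on `F_n(u)⁺`. -/
theorem nehari_pankov_unique_max {E : Type*} [NormedAddCommGroup E]
    [InnerProductSpace ℝ E] [CompleteSpace E]
    (lam : ℕ → ℝ) (ζ : ℕ → E)
    (hlam_mono : Monotone lam) (hlam_nonneg : ∀ k, 0 ≤ lam k)
    (hlam_top : Tendsto lam atTop atTop)
    (hON : ∀ j k, ⟪ζ j, ζ k⟫_ℝ = if j = k then 1 + lam k else 0)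
    (hdense : (Submodule.span ℝ (Set.range ζ)).topologicalClosure = ⊤)
    (I : E → ℝ) (I' : E → E →L[ℝ] ℝ)
    (hIderiv : ∀ u, HasFDerivAt I (I' u) u) (hIderiv_cont : Continuous I')
    (hI1 : ∀ (u : ℕ → E) (a : E),
      (∀ φ : E →L[ℝ] ℝ, Tendsto (fun j => φ (u j)) atTop (𝓝 (φ a))) →
      Tendsto (fun j => I (u j)) atTop (𝓝 (I a)))
    (hI2 : I 0 = 0 ∧ ∀ u : E, u ≠ 0 → 0 < I u)
    (hI3mono : ∀ u : E, u ≠ 0 → MonotoneOn (fun t : ℝ => I (t • u) / t ^ 2) (Ioi 0))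
    (hI3zero : ∀ u : E, u ≠ 0 → Tendsto (fun t : ℝ => I (t • u) / t ^ 2) (𝓝[>] 0) (𝓝 0))
    (hI3top : ∀ u : E, u ≠ 0 → Tendsto (fun t : ℝ => I (t • u) / t ^ 2) atTop atTop)
    (hI4 : ∀ u : E, u ≠ 0 → ∀ v : E, ∀ s : ℝ, -1 ≤ s →
      I u - I ((1 + s) • u + v) + I' u ((s * (s / 2 + 1)) • u + (1 + s) • v) ≤ 0)
    (hI4strict : ∀ u : E, u ≠ 0 → ∀ s : ℝ, -1 ≤ s → s ≠ 0 →
      I u - I ((1 + s) • u) + I' u ((s * (s / 2 + 1)) • u) < 0)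
    (n : ℕ)
    (lambda : ℝ) (hlambda : lambda ∈ Ioo (lam n) (lam (n + 1)))
    (u : E) (hu : u ∈ NehariPankov lam ζ I' n lambda) :
    ∀ w ∈ FsubPlus ζ n u, w ≠ u → Jfun lam ζ I lambda w < Jfun lam ζ I lambda u := by
  have hu0 : u ≠ 0 := fun h => hu.1 (h ▸ zero_mem _)
  exact nehari_pankov_unique_max_general hlam_nonneg hON (hIderiv u) (hI4 u hu0)
    (hI4strict u hu0) (fun k hk => (hlam_mono hk).trans_lt hlambda.1) hu
end

section
/- Under assumptions (I1)–(I4), let (λ^k)_k be a sequence in (λ_n, λ_{n+1}) converging to some λ ∈ (λ_n, λ_{n+1}), and let (w_k)_k be a sequence in E_n^⊥ with ‖w_k‖_E = 1 for all k and sup_k sup_{F_n(w_k)⁺} J_{λ^k} < ∞. Then, after passing to a subsequence, w_k ⇀ w weakly in E for some w ∈ E_n^⊥∖{0}, and sup_{F_n(w)⁺} J_λ ≤ liminf_{k→∞} sup_{F_n(w_k)⁺} J_{λ^k}. -/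
open Filter Topology Set
open scoped InnerProductSpace

/- Abstract setting: `E = D(A^{1/2})` is a real Hilbert space in which the rescaled
eigenfunctions `ζ_k / √(1+λ_k)` form a Hilbert basis (encoded by `hON` and `hdense` below);
the `H`-inner product of `u, v ∈ E` is recovered as `∑ₖ ⟨u,ζ_k⟩_H ⟨v,ζ_k⟩_H`, where
`⟨u,ζ_k⟩_H = ⟨u,ζ_k⟩_E / (1+λ_k)`. -/

variable {E : Type*} [NormedAddCommGroup E] [InnerProductSpace ℝ E] [CompleteSpace E]

/-!
A bounded sequence has a weak limit `w₀` along a subsequence on which the suprema converge to their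
`liminf`. The functionals `J_μ` are weakly sequentially lower semicontinuous jointly in `μ`:
only finitely many eigenvalues lie below `μ + 1`, so every long enough partial sum bounds `q_μ`
from below, while partial sums are weakly continuous. Applied along `v + t w_k ⇀ v + t w₀`, this
gives the comparison of suprema.

If `w₀` were `0`, the identity `2 q_μ(u) = ‖u‖² + q_{1+2μ}(u)` and the lower semicontinuity of
`q_{1+2μ}` would force `liminf J(t w_k) ≥ t² liminf ‖w_k‖² / 4 - I(0)`, which is unbounded in `t`.
-/

/-- Weak convergence of `u` to `a` along the filter `l`, tested against continuous linear
functionals. -/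
def WeaklyTendsto {ι V : Type*} [NormedAddCommGroup V] [NormedSpace ℝ V] (u : ι → V)
    (l : Filter ι) (a : V) : Prop :=
  ∀ ψ : V →L[ℝ] ℝ, Tendsto (fun j => ψ (u j)) l (𝓝 (ψ a))

/-- Sequential continuity of a functional for weak convergence of its argument. -/
def WeaklySeqContinuous {V : Type*} [NormedAddCommGroup V] [NormedSpace ℝ V] (I : V → ℝ) : Prop :=
  ∀ (u : ℕ → V) (a : V), WeaklyTendsto u atTop a → Tendsto (fun j => I (u j)) atTop (𝓝 (I a))

namespace WeaklyTendsto

section NormedSpace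

variable {ι V : Type*} [NormedAddCommGroup V] [NormedSpace ℝ V] {l : Filter ι} {u : ι → V} {a : V}

lemma of_tendsto (hu : Tendsto u l (𝓝 a)) : WeaklyTendsto u l a :=
  fun ψ => (ψ.continuous.tendsto a).comp hu

lemma const_add_smul (hu : WeaklyTendsto u l a) (v : V) (t : ℝ) :
    WeaklyTendsto (fun j => v + t • u j) l (v + t • a) := fun ψ => by
  simpa only [map_add, map_smul] using ((hu ψ).const_smul t).const_add (ψ v)

end NormedSpace

section InnerProductSpace

variable {ι V : Type*} [NormedAddCommGroup V] [InnerProductSpace ℝ V] {l : Filter ι} {u : ι → V}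
  {a : V}

lemma tendsto_coefH (hu : WeaklyTendsto u l a) (lam : ℕ → ℝ) (ζ : ℕ → V) (k : ℕ) :
    Tendsto (fun j => coefH lam ζ (u j) k) l (𝓝 (coefH lam ζ a k)) := by
  have hinner := hu (innerSL ℝ (ζ k))
  simp only [innerSL_apply_apply, real_inner_comm _ (ζ k)] at hinner
  exact hinner.div_const _

lemma mem_EsubPerp [l.NeBot] {lam : ℕ → ℝ} {ζ : ℕ → V} {n : ℕ} (hu : WeaklyTendsto u l a)
    (hperp : ∀ j, u j ∈ EsubPerp lam ζ n) : a ∈ EsubPerp lam ζ n := fun k hk =>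
  tendsto_nhds_unique (hu.tendsto_coefH lam ζ k) (by simp only [hperp _ k hk, tendsto_const_nhds])

end InnerProductSpace

end WeaklyTendsto

lemma exists_subseq_weaklyTendsto {V : Type*} [NormedAddCommGroup V] [InnerProductSpace ℝ V]
    [CompleteSpace V] [TopologicalSpace.SeparableSpace V] {u : ℕ → V} {R : ℝ}
    (hu : ∀ k, ‖u k‖ ≤ R) :
    ∃ φ : ℕ → ℕ, StrictMono φ ∧ ∃ a : V, WeaklyTendsto (u ∘ φ) atTop a := by
  obtain ⟨f, -, φ, hφ, hf⟩ := WeakDual.isSeqCompact_closedBall ℝ V 0 R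
    (x := fun k => StrongDual.toWeakDual (InnerProductSpace.toDual ℝ V (u k)))
    (fun k => by simpa using hu k)
  refine ⟨φ, hφ, (InnerProductSpace.toDual ℝ V).symm (WeakDual.toStrongDual f), fun ψ => ?_⟩
  have riesz : ∀ x, ψ x = ⟪x, (InnerProductSpace.toDual ℝ V).symm ψ⟫_ℝ := fun x => by
    rw [real_inner_comm, InnerProductSpace.toDual_symm_apply]
  simp only [riesz, InnerProductSpace.toDual_symm_apply]
  exact tendsto_iff_forall_eval_tendsto_topDualPairing.1 hf _

section Basic

variable {V : Type*} [NormedAddCommGroup V] [InnerProductSpace ℝ V]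

lemma smul_mem_FsubPlus (ζ : ℕ → V) (n : ℕ) (u : V) {t : ℝ} (ht : 0 < t) :
    t • u ∈ FsubPlus ζ n u :=
  ⟨0, zero_mem _, t, ht, (zero_add _).symm⟩

lemma FsubPlus_nonempty (ζ : ℕ → V) (n : ℕ) (u : V) : (FsubPlus ζ n u).Nonempty :=
  ⟨_, smul_mem_FsubPlus ζ n u one_pos⟩

lemma Jfun_zero (lam : ℕ → ℝ) (ζ : ℕ → V) (I : V → ℝ) (mu : ℝ) : Jfun lam ζ I mu 0 = -I 0 := by
  simp [Jfun, qForm, coefH]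

end Basic

/-- The family `ζ` consists of eigenvectors for the eigenvalues `lam`, as seen in the energy space:
it is total and orthogonal with `‖ζ_k‖² = 1 + lam k`, where `lam k > -1` makes `coefH` the
coefficient in the expansion along `ζ`. -/
structure IsEnergyBasis {V : Type*} [NormedAddCommGroup V] [InnerProductSpace ℝ V] (lam : ℕ → ℝ)
    (ζ : ℕ → V) : Prop where
  neg_one_lt : ∀ k, -1 < lam k
  inner_eq : ∀ j k, ⟪ζ j, ζ k⟫_ℝ = if j = k then 1 + lam k else 0
  dense_span : (Submodule.span ℝ (range ζ)).topologicalClosure = ⊤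

namespace IsEnergyBasis

section Parseval

variable {V : Type*} [NormedAddCommGroup V] [InnerProductSpace ℝ V] {lam : ℕ → ℝ} {ζ : ℕ → V}

lemma separableSpace (h : IsEnergyBasis lam ζ) : TopologicalSpace.SeparableSpace V := by
  have hspan := ((countable_range ζ).isSeparable.span (R := ℝ)).closure
  rw [← Submodule.topologicalClosure_coe, h.dense_span] at hspan
  exact TopologicalSpace.isSeparable_univ_iff.1 hspan

lemma one_add_pos (h : IsEnergyBasis lam ζ) (k : ℕ) : 0 < 1 + lam k := by
  linarith [h.neg_one_lt k]

lemma inv_sqrt_mul_self (h : IsEnergyBasis lam ζ) (k : ℕ) :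
    (√(1 + lam k))⁻¹ * (√(1 + lam k))⁻¹ = (1 + lam k)⁻¹ := by
  rw [← mul_inv, Real.mul_self_sqrt (h.one_add_pos k).le]

lemma orthonormal (h : IsEnergyBasis lam ζ) :
    Orthonormal ℝ (fun k => (√(1 + lam k))⁻¹ • ζ k) := by
  refine orthonormal_iff_ite.2 fun i j => ?_
  simp only [real_inner_smul_left, real_inner_smul_right, h.inner_eq]
  split_ifs with hij
  · rw [hij, ← mul_assoc, h.inv_sqrt_mul_self, inv_mul_cancel₀ (h.one_add_pos j).ne']
  · simp

lemma dense_span_normalized (h : IsEnergyBasis lam ζ) :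
    ⊤ ≤ (Submodule.span ℝ (range fun k => (√(1 + lam k))⁻¹ • ζ k)).topologicalClosure := by
  rw [← h.dense_span]
  refine Submodule.topologicalClosure_mono (Submodule.span_le.2 (range_subset_iff.2 fun k => ?_))
  rw [← smul_inv_smul₀ (Real.sqrt_pos.2 (h.one_add_pos k)).ne' (ζ k)]
  exact Submodule.smul_mem _ _ (Submodule.subset_span (mem_range_self k))

variable [CompleteSpace V]

lemma hasSum_norm_sq (h : IsEnergyBasis lam ζ) (u : V) :
    HasSum (fun k => (1 + lam k) * coefH lam ζ u k ^ 2) (‖u‖ ^ 2) := by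
  have parseval :=
    (HilbertBasis.mk h.orthonormal h.dense_span_normalized).hasSum_inner_mul_inner u u
  rw [HilbertBasis.coe_mk, real_inner_self_eq_norm_sq] at parseval
  refine parseval.congr_fun fun k => ?_
  rw [real_inner_smul_left, real_inner_smul_right, real_inner_comm u, mul_mul_mul_comm,
    h.inv_sqrt_mul_self, coefH]
  field_simp [(h.one_add_pos k).ne']

lemma summable_coefH_sq (h : IsEnergyBasis lam ζ) (hlam : Tendsto lam atTop atTop) (u : V) :
    Summable (fun k => coefH lam ζ u k ^ 2) := by
  refine (h.hasSum_norm_sq u).summable.of_norm_bounded_eventually_nat ?_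
  filter_upwards [hlam.eventually_ge_atTop 0] with k hk
  rw [Real.norm_of_nonneg (sq_nonneg _)]
  exact le_mul_of_one_le_left (sq_nonneg _) (by linarith)

lemma hasSum_qForm (h : IsEnergyBasis lam ζ) (hlam : Tendsto lam atTop atTop) (mu : ℝ) (u : V) :
    HasSum (fun k => (lam k - mu) * (coefH lam ζ u k * coefH lam ζ u k))
      (qForm lam ζ mu u u) := by
  refine Summable.hasSum (((h.hasSum_norm_sq u).summable.sub
    ((h.summable_coefH_sq hlam u).mul_left (1 + mu))).congr fun k => ?_)
  ring

lemma two_mul_qForm (h : IsEnergyBasis lam ζ) (hlam : Tendsto lam atTop atTop) (mu : ℝ) (u : V) :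
    2 * qForm lam ζ mu u u = ‖u‖ ^ 2 + qForm lam ζ (1 + 2 * mu) u u := by
  refine ((h.hasSum_qForm hlam mu u).mul_left 2).unique
    (((h.hasSum_norm_sq u).add (h.hasSum_qForm hlam (1 + 2 * mu) u)).congr_fun fun k => ?_)
  ring

lemma Jfun_eq_norm_sq_add (h : IsEnergyBasis lam ζ) (hlam : Tendsto lam atTop atTop) (I : V → ℝ)
    (mu : ℝ) (u : V) :
    Jfun lam ζ I mu u = ‖u‖ ^ 2 / 4 + Jfun lam ζ (fun x => 2 * I x) (1 + 2 * mu) u / 2 := by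
  simp only [Jfun]
  linarith [h.two_mul_qForm hlam mu u]

end Parseval

section LowerSemicontinuity

variable {V ι : Type*} [NormedAddCommGroup V] [InnerProductSpace ℝ V] [CompleteSpace V]
  {lam : ℕ → ℝ} {ζ : ℕ → V} {l : Filter ι} {u : ι → V} {a : V} {mus : ι → ℝ} {mu b : ℝ}

lemma eventually_lt_qForm (h : IsEnergyBasis lam ζ) (hlam : Tendsto lam atTop atTop)
    (hu : WeaklyTendsto u l a) (hmus : Tendsto mus l (𝓝 mu)) (hb : b < qForm lam ζ mu a a) :
    ∀ᶠ j in l, b < qForm lam ζ (mus j) (u j) (u j) := by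
  obtain ⟨K, hbK, hlamK⟩ :=
    (((h.hasSum_qForm hlam mu a).tendsto_sum_nat.eventually_const_lt hb).and
      (eventually_forall_ge_atTop.2 (hlam.eventually_ge_atTop (mu + 1)))).exists
  have partial_sum_tendsto : Tendsto
      (fun j => ∑ k ∈ Finset.range K,
        (lam k - mus j) * (coefH lam ζ (u j) k * coefH lam ζ (u j) k)) l
      (𝓝 (∑ k ∈ Finset.range K, (lam k - mu) * (coefH lam ζ a k * coefH lam ζ a k))) :=
    tendsto_finsetSum _ fun k _ =>
      (hmus.const_sub _).mul ((hu.tendsto_coefH lam ζ k).mul (hu.tendsto_coefH lam ζ k))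
  filter_upwards [partial_sum_tendsto.eventually_const_lt hbK,
    hmus.eventually_lt_const (lt_add_one mu)] with j hbj hmuj
  refine hbj.trans_le (sum_le_hasSum _ (fun k hk => ?_) (h.hasSum_qForm hlam _ _))
  have hlamk : mu + 1 ≤ lam k := hlamK k (by simpa using hk)
  exact mul_nonneg (by linarith) (mul_self_nonneg _)

lemma eventually_lt_Jfun (h : IsEnergyBasis lam ζ) (hlam : Tendsto lam atTop atTop) {I : V → ℝ}
    (hu : WeaklyTendsto u l a) (hI : Tendsto (fun j => I (u j)) l (𝓝 (I a)))
    (hmus : Tendsto mus l (𝓝 mu)) (hb : b < Jfun lam ζ I mu a) :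
    ∀ᶠ j in l, b < Jfun lam ζ I (mus j) (u j) := by
  set ε := Jfun lam ζ I mu a - b with hε
  have hε_pos : 0 < ε := sub_pos.2 hb
  filter_upwards [h.eventually_lt_qForm hlam hu hmus (sub_lt_self _ hε_pos),
    hI.eventually_lt_const (lt_add_of_pos_right _ (half_pos hε_pos))] with j hq hIj
  simp only [Jfun] at hε ⊢
  linarith

end LowerSemicontinuity

section Suprema

variable {V : Type*} [NormedAddCommGroup V] [InnerProductSpace ℝ V] [CompleteSpace V]
  {lam : ℕ → ℝ} {ζ : ℕ → V} {I : V → ℝ} {n : ℕ} {w : ℕ → V} {w₀ : V} {mus : ℕ → ℝ} {mu : ℝ}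

lemma neg_apply_zero_le_sSup (h : IsEnergyBasis lam ζ) (hlam : Tendsto lam atTop atTop)
    (hI : WeaklySeqContinuous I) {u : V} (hbdd : BddAbove (Jfun lam ζ I mu '' FsubPlus ζ n u)) :
    -I 0 ≤ sSup (Jfun lam ζ I mu '' FsubPlus ζ n u) := by
  refine le_of_forall_lt fun b hb => ?_
  have shrink : WeaklyTendsto (fun j : ℕ => (1 / ((j : ℝ) + 1)) • u) atTop 0 :=
    .of_tendsto (by simpa using (tendsto_one_div_add_atTop_nhds_zero_nat (𝕜 := ℝ)).smul_const u)
  rw [← Jfun_zero lam ζ I mu] at hb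
  obtain ⟨j, hj⟩ :=
    (h.eventually_lt_Jfun hlam shrink (hI _ _ shrink) tendsto_const_nhds hb).exists
  exact hj.trans_le
    (le_csSup hbdd (mem_image_of_mem _ (smul_mem_FsubPlus ζ n u Nat.one_div_pos_of_nat)))

lemma ne_zero_of_weaklyTendsto (h : IsEnergyBasis lam ζ) (hlam : Tendsto lam atTop atTop)
    (hI : WeaklySeqContinuous I) (hw : WeaklyTendsto w atTop w₀)
    (hmus : Tendsto mus atTop (𝓝 mu)) {r C : ℝ} (hr : 0 < r) (hnorm : ∀ k, r ≤ ‖w k‖)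
    (hC : ∀ k, ∀ t : ℝ, 0 < t → Jfun lam ζ I (mus k) (t • w k) ≤ C) : w₀ ≠ 0 := by
  rintro rfl
  let t : ℝ := (2 * |C + I 0| + 2) / r
  have ht : 0 < t := by positivity
  have scaled : WeaklyTendsto (fun k => t • w k) atTop 0 := by
    simpa using hw.const_add_smul 0 t
  have hb : -(2 * I 0) - 1 < Jfun lam ζ (fun x => 2 * I x) (1 + 2 * mu) 0 := by
    rw [Jfun_zero]
    linarith
  obtain ⟨k, hk⟩ := (h.eventually_lt_Jfun hlam scaled ((hI _ _ scaled).const_mul 2)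
    ((hmus.const_mul 2).const_add 1) hb).exists
  have hJ := hC k t ht
  rw [h.Jfun_eq_norm_sq_add hlam] at hJ
  have norm_ge : 2 * |C + I 0| + 2 ≤ ‖t • w k‖ := by
    rw [norm_smul, Real.norm_of_nonneg ht.le, ← div_mul_cancel₀ (2 * |C + I 0| + 2) hr.ne']
    exact mul_le_mul_of_nonneg_left (hnorm k) ht.le
  have norm_sq_ge : |C + I 0| + 1 ≤ ‖t • w k‖ ^ 2 / 4 := by
    nlinarith [abs_nonneg (C + I 0)]
  linarith [le_abs_self (C + I 0)]

lemma sSup_Jfun_le_of_tendsto (h : IsEnergyBasis lam ζ) (hlam : Tendsto lam atTop atTop)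
    (hI : WeaklySeqContinuous I) (hw : WeaklyTendsto w atTop w₀)
    (hmus : Tendsto mus atTop (𝓝 mu))
    (hbdd : ∀ k, BddAbove (Jfun lam ζ I (mus k) '' FsubPlus ζ n (w k))) {L : ℝ}
    (hL : Tendsto (fun k => sSup (Jfun lam ζ I (mus k) '' FsubPlus ζ n (w k))) atTop (𝓝 L)) :
    sSup (Jfun lam ζ I mu '' FsubPlus ζ n w₀) ≤ L := by
  refine csSup_le ((FsubPlus_nonempty ζ n w₀).image _) ?_
  rintro _ ⟨_, ⟨v, hv, t, ht, rfl⟩, rfl⟩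
  refine le_of_forall_lt_imp_le_of_dense fun b hb => ge_of_tendsto hL ?_
  have hu := hw.const_add_smul v t
  filter_upwards [h.eventually_lt_Jfun hlam hu (hI _ _ hu) hmus hb] with k hk
  exact hk.le.trans (le_csSup (hbdd k) (mem_image_of_mem _ ⟨v, hv, t, ht, rfl⟩))

end Suprema

end IsEnergyBasis

theorem weak_compactness_of_half_space_suprema_general {E : Type*} [NormedAddCommGroup E]
    [InnerProductSpace ℝ E] [CompleteSpace E] {lam : ℕ → ℝ} {ζ : ℕ → E}
    (h : IsEnergyBasis lam ζ) (hlam : Tendsto lam atTop atTop) {I : E → ℝ}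
    (hI : WeaklySeqContinuous I) (n : ℕ) {mu : ℝ} {mus : ℕ → ℝ} (hmus : Tendsto mus atTop (𝓝 mu))
    {w : ℕ → E} (hwperp : ∀ k, w k ∈ EsubPerp lam ζ n)
    {r R : ℝ} (hr : 0 < r) (hrw : ∀ k, r ≤ ‖w k‖) (hwR : ∀ k, ‖w k‖ ≤ R)
    (hbdd : ∃ C : ℝ, ∀ k, ∀ x ∈ FsubPlus ζ n (w k), Jfun lam ζ I (mus k) x ≤ C) :
    ∃ φ : ℕ → ℕ, StrictMono φ ∧ ∃ w₀ : E, w₀ ∈ EsubPerp lam ζ n ∧ w₀ ≠ 0 ∧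
      WeaklyTendsto (fun k => w (φ k)) atTop w₀ ∧
      sSup (Jfun lam ζ I mu '' FsubPlus ζ n w₀) ≤
        liminf (fun k => sSup (Jfun lam ζ I (mus k) '' FsubPlus ζ n (w k))) atTop := by
  obtain ⟨C, hC⟩ := hbdd
  have := h.separableSpace
  have hbdd_k : ∀ k, BddAbove (Jfun lam ζ I (mus k) '' FsubPlus ζ n (w k)) :=
    fun k => ⟨C, forall_mem_image.2 (hC k)⟩
  have sup_le : ∀ k, sSup (Jfun lam ζ I (mus k) '' FsubPlus ζ n (w k)) ≤ C :=
    fun k => csSup_le ((FsubPlus_nonempty ζ n (w k)).image _) (forall_mem_image.2 (hC k))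
  obtain ⟨φ, hφ, hφL⟩ := MapClusterPt.tendsto_subseq
    (MapClusterPt.liminf (isBoundedUnder_of ⟨C, sup_le⟩).isCoboundedUnder_ge
      (isBoundedUnder_of ⟨-I 0, fun k => h.neg_apply_zero_le_sSup hlam hI (hbdd_k k)⟩))
  obtain ⟨ψ, hψ, w₀, hw₀⟩ := exists_subseq_weaklyTendsto fun k => hwR (φ k)
  have hmus' := hmus.comp (hφ.comp hψ).tendsto_atTop
  exact ⟨φ ∘ ψ, hφ.comp hψ, w₀, hw₀.mem_EsubPerp fun k => hwperp _,
    h.ne_zero_of_weaklyTendsto hlam hI hw₀ hmus' hr (fun k => hrw _)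
      fun k t ht => hC _ _ (smul_mem_FsubPlus ζ n _ ht),
    hw₀, h.sSup_Jfun_le_of_tendsto hlam hI hw₀ hmus' (fun k => hbdd_k _)
      (hφL.comp hψ.tendsto_atTop)⟩

/-- Weak compactness: if `λ^k → λ` in the gap, `w_k ∈ E_n^⊥` with
`‖w_k‖_E = 1` and the suprema `sup_{F_n(w_k)⁺} J_{λ^k}` are uniformly bounded, then along a
subsequence `w_k ⇀ w ∈ E_n^⊥ ∖ {0}` weakly in `E`, and
`sup_{F_n(w)⁺} J_λ ≤ liminf_k sup_{F_n(w_k)⁺} J_{λ^k}`. -/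
theorem weak_compactness_of_half_space_suprema {E : Type*} [NormedAddCommGroup E]
    [InnerProductSpace ℝ E] [CompleteSpace E]
    (lam : ℕ → ℝ) (ζ : ℕ → E)
    (hlam_mono : Monotone lam) (hlam_nonneg : ∀ k, 0 ≤ lam k)
    (hlam_top : Tendsto lam atTop atTop)
    (hON : ∀ j k, ⟪ζ j, ζ k⟫_ℝ = if j = k then 1 + lam k else 0)
    (hdense : (Submodule.span ℝ (Set.range ζ)).topologicalClosure = ⊤)
    (I : E → ℝ) (I' : E → E →L[ℝ] ℝ)
    (hIderiv : ∀ u, HasFDerivAt I (I' u) u) (hIderiv_cont : Continuous I')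
    (hI1 : ∀ (u : ℕ → E) (a : E),
      (∀ φ : E →L[ℝ] ℝ, Tendsto (fun j => φ (u j)) atTop (𝓝 (φ a))) →
      Tendsto (fun j => I (u j)) atTop (𝓝 (I a)))
    (hI2 : I 0 = 0 ∧ ∀ u : E, u ≠ 0 → 0 < I u)
    (hI3mono : ∀ u : E, u ≠ 0 → MonotoneOn (fun t : ℝ => I (t • u) / t ^ 2) (Ioi 0))
    (hI3zero : ∀ u : E, u ≠ 0 → Tendsto (fun t : ℝ => I (t • u) / t ^ 2) (𝓝[>] 0) (𝓝 0))
    (hI3top : ∀ u : E, u ≠ 0 → Tendsto (fun t : ℝ => I (t • u) / t ^ 2) atTop atTop)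
    (hI4 : ∀ u : E, u ≠ 0 → ∀ v : E, ∀ s : ℝ, -1 ≤ s →
      I u - I ((1 + s) • u + v) + I' u ((s * (s / 2 + 1)) • u + (1 + s) • v) ≤ 0)
    (hI4strict : ∀ u : E, u ≠ 0 → ∀ s : ℝ, -1 ≤ s → s ≠ 0 →
      I u - I ((1 + s) • u) + I' u ((s * (s / 2 + 1)) • u) < 0)
    (n : ℕ)
    (lambda : ℝ) (hlambda : lambda ∈ Ioo (lam n) (lam (n + 1)))
    (lamseq : ℕ → ℝ) (hlamseq : ∀ k, lamseq k ∈ Ioo (lam n) (lam (n + 1)))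
    (hlamseq_tendsto : Tendsto lamseq atTop (𝓝 lambda))
    (w : ℕ → E) (hwperp : ∀ k, w k ∈ EsubPerp lam ζ n) (hwnorm : ∀ k, ‖w k‖ = 1)
    (hbdd : ∃ C : ℝ, ∀ k, ∀ x ∈ FsubPlus ζ n (w k), Jfun lam ζ I (lamseq k) x ≤ C) :
    ∃ φ : ℕ → ℕ, StrictMono φ ∧ ∃ w₀ : E, w₀ ∈ EsubPerp lam ζ n ∧ w₀ ≠ 0 ∧
      (∀ ψ : E →L[ℝ] ℝ, Tendsto (fun k => ψ (w (φ k))) atTop (𝓝 (ψ w₀))) ∧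
      sSup (Jfun lam ζ I lambda '' FsubPlus ζ n w₀) ≤
        Filter.liminf (fun k => sSup (Jfun lam ζ I (lamseq k) '' FsubPlus ζ n (w k)))
          atTop :=
  weak_compactness_of_half_space_suprema_general
    ⟨fun k => neg_one_lt_zero.trans_le (hlam_nonneg k), hON, hdense⟩ hlam_top hI1 n hlamseq_tendsto
    hwperp one_pos (fun k => (hwnorm k).ge) (fun k => (hwnorm k).le) hbdd
end
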